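/- arXiv:2605.03867 — 3 statements merged into one kernel-verified Lean document; each statement's English description precedes it below -/
import Mathlib

section
/- Let d ≥ 2, let δ ∈ (0,1) and ε > 0, and set C = (2d − 2 + 2ε(d−1)/3)/ε². If n is a positive integer with n ≥ C · log(2d/δ), and (x_i)_{i=1}^n are independent random vectors drawn uniformly from the sphere of radius sqrt(d/n) in ℝ^d with frame operator S = Σ_{i=1}^n x_i x_i^*, then the probability that ‖S − I_d‖_op ≥ ε is at most δ. -/
open MeasureTheory ProbabilityTheory Real

noncomputable section

/-- The frame operator `S v = ∑ i, ⟪x i, v⟫ • x i` of a finite family of vectors in `ℝ^d`,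
as a continuous linear map on Euclidean space. -/
def frameOperator {d n : ℕ} (x : Fin n → EuclideanSpace ℝ (Fin d)) :
    EuclideanSpace ℝ (Fin d) →L[ℝ] EuclideanSpace ℝ (Fin d) :=
  ∑ i, (innerSL ℝ (x i)).smulRight (x i)

/-!
By Golden–Thompson, `𝔼 tr exp (X + Y) ≤ tr (𝔼 exp X * 𝔼 exp Y)` for independent Hermitian `X` and
`Y`. Peeling off one summand at a time bounds `𝔼 tr exp (θ ∑ Xᵢ)` by the dimension times a product
of scalars, where the scalar for `Xᵢ` comes from integrating `exp A ≤ 1 + A + A² / (2 (1 - b / 3))`,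
valid for `‖A‖ ≤ b < 3`. Markov's inequality and optimizing over `θ` give the matrix Bernstein
inequality.

A rotation-invariant law on the sphere of radius `√(d/n)` is isotropic, `𝔼 x xᵀ = n⁻¹ • 1`. Since
`(x xᵀ)² = (d/n) x xᵀ`, the centred matrix `x xᵀ - n⁻¹ • 1` then has norm at most `(d - 1) / n` and
second moment exactly `((d - 1) / n²) • 1`, whence the constant in the sample bound.
-/

open Filter Topology InnerProductSpace NormedSpace
open scoped Matrix Matrix.Norms.L2Operator MatrixOrder ComplexOrder

section Trace

variable {m 𝕜 : Type*} [Fintype m] [RCLike 𝕜]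

lemma norm_trace_mul_le (X Y : Matrix m m 𝕜) :
    ‖(X * Y).trace‖ ≤ √(RCLike.re (X * Xᴴ).trace) * √(RCLike.re (Yᴴ * Y).trace) := by
  classical
  let _ := Matrix.toMatrixSeminormedAddCommGroup (1 : Matrix m m 𝕜) Matrix.PosSemidef.one
  let _ := Matrix.toMatrixInnerProductSpace (1 : Matrix m m 𝕜) Matrix.PosSemidef.one
  have inner_def (A B : Matrix m m 𝕜) : inner 𝕜 A B = (B * 1 * Aᴴ).trace := rfl
  have h := norm_inner_le_norm (𝕜 := 𝕜) Yᴴ X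
  simpa only [inner_def, norm_eq_sqrt_re_inner (𝕜 := 𝕜), mul_one,
    Matrix.conjTranspose_conjTranspose, mul_comm √(RCLike.re (Yᴴ * Y).trace)] using h

variable [DecidableEq m]

lemma trace_mul_pow_comm (A B : Matrix m m 𝕜) (k : ℕ) :
    ((A * B) ^ k).trace = ((B * A) ^ k).trace := by
  cases k with
  | zero => simp only [pow_zero]
  | succ k =>
    have hAB : A * (B * A) ^ k = (A * B) ^ k * A :=
      (SemiconjBy.pow_right (mul_assoc A B A).symm k).eq
    rw [pow_succ, ← mul_assoc, ← hAB, Matrix.trace_mul_comm, ← mul_assoc, ← pow_succ']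

lemma trace_pow_conjTranspose_mul_self_nonneg (X : Matrix m m 𝕜) (k : ℕ) :
    0 ≤ RCLike.re ((Xᴴ * X) ^ k).trace :=
  (RCLike.nonneg_iff.mp ((Matrix.posSemidef_conjTranspose_mul_self X).pow k).trace_nonneg).1

lemma norm_trace_mul_pow_le_of_isHermitian {A B : Matrix m m 𝕜} (hA : A.IsHermitian)
    (hB : B.IsHermitian) (k : ℕ) :
    ‖(A ^ k * B ^ k).trace‖ ≤
      √(RCLike.re (A ^ (2 * k)).trace) * √(RCLike.re (B ^ (2 * k)).trace) := by
  simpa only [(hA.pow k).eq, (hB.pow k).eq, ← pow_add, ← two_mul] using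
    norm_trace_mul_le (A ^ k) (B ^ k)

lemma trace_conjTranspose_sq_mul_sq_pow (X : Matrix m m 𝕜) (k : ℕ) :
    (((X ^ 2)ᴴ * X ^ 2) ^ k).trace = (((Xᴴ * X) * (X * Xᴴ)) ^ k).trace := by
  have h : (X ^ 2)ᴴ * X ^ 2 = Xᴴ * (Xᴴ * X * X) := by
    simp only [sq, Matrix.conjTranspose_mul, mul_assoc]
  rw [h, trace_mul_pow_comm]
  simp only [mul_assoc]

lemma trace_conjTranspose_mul_self_pow_of_isHermitian {A B : Matrix m m 𝕜}
    (hA : A.IsHermitian) (hB : B.IsHermitian) (k : ℕ) :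
    (((A * B)ᴴ * (A * B)) ^ k).trace = ((A ^ 2 * B ^ 2) ^ k).trace := by
  have h : (A * B)ᴴ * (A * B) = B * (A ^ 2 * B) := by
    simp only [Matrix.conjTranspose_mul, hA.eq, hB.eq, sq, mul_assoc]
  rw [h, trace_mul_pow_comm, mul_assoc, ← sq]

-- The two inequalities are interleaved: each of them at level `k + 1` rests on the other one.
lemma norm_trace_two_pow_le_and_re_trace_mul_two_pow_le (k : ℕ) :
    (∀ X : Matrix m m 𝕜,
      ‖(X ^ 2 ^ (k + 1)).trace‖ ≤ RCLike.re ((Xᴴ * X) ^ 2 ^ k).trace) ∧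
    ∀ A B : Matrix m m 𝕜, A.IsHermitian → B.IsHermitian →
      RCLike.re ((A * B) ^ 2 ^ k).trace ≤ RCLike.re (A ^ 2 ^ k * B ^ 2 ^ k).trace := by
  induction k with
  | zero =>
    refine ⟨fun X => ?_, fun A B _ _ => by simp only [pow_zero, pow_one, le_refl]⟩
    have h := norm_trace_mul_le X X
    rw [Matrix.trace_mul_comm X Xᴴ, Real.mul_self_sqrt
      (by simpa only [pow_one] using trace_pow_conjTranspose_mul_self_nonneg X 1)] at h
    simpa only [zero_add, pow_zero, pow_one, sq] using h
  | succ k ih =>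
    obtain ⟨norm_le, mul_pow_le⟩ := ih
    constructor
    · intro X
      have hL := Matrix.isHermitian_conjTranspose_mul_self X
      have hR := Matrix.isHermitian_mul_conjTranspose_self X
      calc ‖(X ^ 2 ^ (k + 1 + 1)).trace‖
          = ‖((X ^ 2) ^ 2 ^ (k + 1)).trace‖ := by rw [← pow_mul, ← pow_succ']
        _ ≤ RCLike.re (((X ^ 2)ᴴ * X ^ 2) ^ 2 ^ k).trace := norm_le (X ^ 2)
        _ = RCLike.re (((Xᴴ * X) * (X * Xᴴ)) ^ 2 ^ k).trace := by
            rw [trace_conjTranspose_sq_mul_sq_pow]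
        _ ≤ RCLike.re ((Xᴴ * X) ^ 2 ^ k * (X * Xᴴ) ^ 2 ^ k).trace := mul_pow_le _ _ hL hR
        _ ≤ ‖((Xᴴ * X) ^ 2 ^ k * (X * Xᴴ) ^ 2 ^ k).trace‖ := RCLike.re_le_norm _
        _ ≤ RCLike.re ((Xᴴ * X) ^ 2 ^ (k + 1)).trace := by
            have h := norm_trace_mul_pow_le_of_isHermitian hL hR (2 ^ k)
            rwa [← pow_succ', trace_mul_pow_comm X,
              Real.mul_self_sqrt (trace_pow_conjTranspose_mul_self_nonneg X _)] at h
    · intro A B hA hB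
      calc RCLike.re ((A * B) ^ 2 ^ (k + 1)).trace
          ≤ ‖((A * B) ^ 2 ^ (k + 1)).trace‖ := RCLike.re_le_norm _
        _ ≤ RCLike.re (((A * B)ᴴ * (A * B)) ^ 2 ^ k).trace := norm_le (A * B)
        _ = RCLike.re ((A ^ 2 * B ^ 2) ^ 2 ^ k).trace := by
            rw [trace_conjTranspose_mul_self_pow_of_isHermitian hA hB]
        _ ≤ RCLike.re ((A ^ 2) ^ 2 ^ k * (B ^ 2) ^ 2 ^ k).trace :=
            mul_pow_le _ _ (hA.pow 2) (hB.pow 2)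
        _ = RCLike.re (A ^ 2 ^ (k + 1) * B ^ 2 ^ (k + 1)).trace := by
            rw [← pow_mul, ← pow_mul, ← pow_succ']

end Trace

section ProductFormula

lemma norm_pow_sub_pow_le {R : Type*} [NormedRing R] [NormOneClass R] {x y : R} {M : ℝ}
    (hx : ‖x‖ ≤ M) (hy : ‖y‖ ≤ M) (n : ℕ) :
    ‖x ^ n - y ^ n‖ ≤ n * M ^ (n - 1) * ‖x - y‖ := by
  have hM : 0 ≤ M := (norm_nonneg x).trans hx
  induction n with
  | zero => simp only [pow_zero, sub_self, norm_zero, Nat.cast_zero, zero_mul, le_refl]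
  | succ n ih =>
    calc ‖x ^ (n + 1) - y ^ (n + 1)‖
        = ‖x ^ n * (x - y) + (x ^ n - y ^ n) * y‖ := by
          rw [pow_succ, pow_succ, mul_sub, sub_mul, sub_add_sub_cancel]
      _ ≤ ‖x‖ ^ n * ‖x - y‖ + ‖x ^ n - y ^ n‖ * ‖y‖ := by
          refine norm_add_le_of_le ((norm_mul_le _ _).trans ?_) (norm_mul_le _ _)
          gcongr
          exact norm_pow_le x n
      _ ≤ M ^ n * ‖x - y‖ + n * M ^ (n - 1) * ‖x - y‖ * M := by gcongr
      _ = (n + 1 : ℕ) * M ^ (n + 1 - 1) * ‖x - y‖ := by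
          cases n with
          | zero => simp
          | succ n => simp only [Nat.add_sub_cancel]; push_cast; ring

variable {R : Type*} [NormedRing R] [NormedAlgebra ℝ R] [CompleteSpace R]

lemma hasDerivAt_exp_smul_zero (x : R) : HasDerivAt (fun t : ℝ => exp (t • x)) x 0 := by
  simpa only [zero_smul, NormedSpace.exp_zero, one_mul] using
    hasDerivAt_exp_smul_const (𝕂 := ℝ) x (0 : ℝ)

lemma exp_inv_nat_smul_pow {n : ℕ} (hn : n ≠ 0) (x : R) : exp ((n : ℝ)⁻¹ • x) ^ n = exp x := by
  let _ := NormedAlgebra.restrictScalars ℚ ℝ R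
  rw [← NormedSpace.exp_nsmul, ← Nat.cast_smul_eq_nsmul ℝ,
    smul_inv_smul₀ (Nat.cast_ne_zero.mpr hn)]

variable [NormOneClass R]

lemma norm_exp_le_exp_norm (x : R) : ‖exp x‖ ≤ Real.exp ‖x‖ := by
  have hx := exp_series_hasSum_exp' (𝕂 := ℝ) x
  have hnorm := exp_series_hasSum_exp' (𝕂 := ℝ) ‖x‖
  rw [← Real.exp_eq_exp_ℝ] at hnorm
  rw [← hx.tsum_eq]
  refine tsum_of_norm_bounded hnorm fun k => ?_
  rw [norm_smul, smul_eq_mul, Real.norm_of_nonneg (by positivity)]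
  gcongr
  exact norm_pow_le x k

theorem tendsto_pow_of_hasDerivAt_zero {f : ℝ → R} {x : R} {K : ℝ} (hf₀ : f 0 = 1)
    (hf : HasDerivAt f x 0) (hK : ∀ t, 0 ≤ t → ‖f t‖ ≤ Real.exp (t * K)) :
    Tendsto (fun n : ℕ => f (n : ℝ)⁻¹ ^ n) atTop (𝓝 (exp x)) := by
  set L := max K ‖x‖
  have hfg : Tendsto (fun n : ℕ => (n : ℝ) * ‖f (n : ℝ)⁻¹ - exp ((n : ℝ)⁻¹ • x)‖) atTop (𝓝 0) := by
    have hderiv := hf.sub (hasDerivAt_exp_smul_zero x)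
    have hslope := (hderiv.tendsto_slope_zero_right.comp
      (tendsto_inv_atTop_nhdsGT_zero.comp tendsto_natCast_atTop_atTop)).norm
    simpa [Function.comp_def, hf₀, norm_smul] using hslope
  rw [tendsto_iff_norm_sub_tendsto_zero]
  refine squeeze_zero' (.of_forall fun n => norm_nonneg _) ?_
    (by simpa only [mul_zero] using hfg.const_mul (Real.exp L))
  filter_upwards [eventually_ne_atTop 0] with n hn
  have hfL : ‖f (n : ℝ)⁻¹‖ ≤ Real.exp ((n : ℝ)⁻¹ * L) :=
    (hK _ (by positivity)).trans (by gcongr; exact le_max_left _ _)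
  have hexpL : ‖exp ((n : ℝ)⁻¹ • x)‖ ≤ Real.exp ((n : ℝ)⁻¹ * L) := by
    refine (norm_exp_le_exp_norm _).trans ?_
    rw [norm_smul, Real.norm_of_nonneg (by positivity)]
    gcongr
    exact le_max_right _ _
  have hpow : Real.exp ((n : ℝ)⁻¹ * L) ^ (n - 1) ≤ Real.exp L := by
    have : 0 ≤ L := (norm_nonneg x).trans (le_max_right _ _)
    calc Real.exp ((n : ℝ)⁻¹ * L) ^ (n - 1) ≤ Real.exp ((n : ℝ)⁻¹ * L) ^ n :=
          pow_le_pow_right₀ (Real.one_le_exp (by positivity)) n.pred_le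
      _ = Real.exp L := by
          rw [← Real.exp_nat_mul, mul_inv_cancel_left₀ (Nat.cast_ne_zero.mpr hn)]
  calc ‖f (n : ℝ)⁻¹ ^ n - exp x‖
      = ‖f (n : ℝ)⁻¹ ^ n - exp ((n : ℝ)⁻¹ • x) ^ n‖ := by rw [exp_inv_nat_smul_pow hn]
    _ ≤ n * Real.exp ((n : ℝ)⁻¹ * L) ^ (n - 1) * ‖f (n : ℝ)⁻¹ - exp ((n : ℝ)⁻¹ • x)‖ :=
        norm_pow_sub_pow_le hfL hexpL n
    _ ≤ n * Real.exp L * ‖f (n : ℝ)⁻¹ - exp ((n : ℝ)⁻¹ • x)‖ := by gcongr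
    _ = Real.exp L * (n * ‖f (n : ℝ)⁻¹ - exp ((n : ℝ)⁻¹ • x)‖) := by ring

theorem lie_trotter (x y : R) :
    Tendsto (fun n : ℕ => (exp ((n : ℝ)⁻¹ • x) * exp ((n : ℝ)⁻¹ • y)) ^ n) atTop
      (𝓝 (exp (x + y))) := by
  refine tendsto_pow_of_hasDerivAt_zero (f := fun t : ℝ => exp (t • x) * exp (t • y))
    (K := ‖x‖ + ‖y‖) (by simp only [zero_smul, NormedSpace.exp_zero, mul_one]) ?_ fun t ht => ?_
  · simpa [Pi.mul_def] using (hasDerivAt_exp_smul_zero x).mul (hasDerivAt_exp_smul_zero y)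
  · calc ‖exp (t • x) * exp (t • y)‖ ≤ Real.exp ‖t • x‖ * Real.exp ‖t • y‖ :=
          norm_mul_le_of_le (norm_exp_le_exp_norm _) (norm_exp_le_exp_norm _)
      _ = Real.exp (t * (‖x‖ + ‖y‖)) := by
          rw [← Real.exp_add, norm_smul, norm_smul, Real.norm_of_nonneg ht, mul_add]

end ProductFormula

theorem golden_thompson {m 𝕜 : Type*} [Fintype m] [DecidableEq m] [RCLike 𝕜] {A B : Matrix m m 𝕜}
    (hA : A.IsHermitian) (hB : B.IsHermitian) :
    RCLike.re (exp (A + B)).trace ≤ RCLike.re (exp A * exp B).trace := by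
  let _ : NormedAlgebra ℝ (Matrix m m 𝕜) :=
    { norm_smul_le := fun t M => by
        rw [← algebraMap_smul 𝕜 t M, norm_smul, RCLike.norm_ofReal, Real.norm_eq_abs] }
  cases isEmpty_or_nonempty m
  · simp only [Matrix.trace_eq_zero_of_isEmpty, le_refl]
  have hre : Continuous fun M : Matrix m m 𝕜 => RCLike.re M.trace :=
    RCLike.continuous_re.comp continuous_id.matrix_trace
  have hlim := (hre.tendsto _).comp
    ((lie_trotter A B).comp (tendsto_pow_atTop_atTop_of_one_lt (one_lt_two (α := ℕ))))
  refine le_of_tendsto hlim (.of_forall fun k => ?_)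
  have hexp {C : Matrix m m 𝕜} (hC : C.IsHermitian) (t : ℝ) : (exp (t • C)).IsHermitian :=
    (hC.smul (IsSelfAdjoint.all t)).exp
  simp only [Function.comp_apply]
  calc RCLike.re ((exp (((2 ^ k : ℕ) : ℝ)⁻¹ • A) * exp (((2 ^ k : ℕ) : ℝ)⁻¹ • B)) ^ 2 ^ k).trace
      ≤ RCLike.re (exp (((2 ^ k : ℕ) : ℝ)⁻¹ • A) ^ 2 ^ k *
          exp (((2 ^ k : ℕ) : ℝ)⁻¹ • B) ^ 2 ^ k).trace :=
        (norm_trace_two_pow_le_and_re_trace_mul_two_pow_le k).2 _ _ (hexp hA _) (hexp hB _)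
    _ = RCLike.re (exp A * exp B).trace := by
        simp only [exp_inv_nat_smul_pow (pow_ne_zero k two_ne_zero)]

section ExpBound

lemma real_exp_le_bernstein {x b : ℝ} (hx : |x| ≤ b) (hb : b < 3) :
    Real.exp x ≤ 1 + x + (2 * (1 - b / 3))⁻¹ * x ^ 2 := by
  have hb₀ : 0 ≤ b := (abs_nonneg x).trans hx
  have hexp := exp_series_hasSum_exp' (𝕂 := ℝ) x
  rw [← Real.exp_eq_exp_ℝ] at hexp
  have htail := (hasSum_nat_add_iff' 2).mpr hexp
  have hgeom := (hasSum_geometric_of_lt_one (r := b / 3) (by positivity) (by linarith)).mul_left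
    (x ^ 2 / 2)
  have hterm (k : ℕ) : ((k + 2).factorial : ℝ)⁻¹ • x ^ (k + 2) ≤ x ^ 2 / 2 * (b / 3) ^ k := by
    have hfact : (2 * 3 ^ k : ℝ) ≤ (k + 2).factorial := by
      have h := Nat.factorial_mul_pow_le_factorial (m := 2) (n := k)
      rw [add_comm k 2]
      exact_mod_cast h
    calc ((k + 2).factorial : ℝ)⁻¹ • x ^ (k + 2)
        ≤ ((k + 2).factorial : ℝ)⁻¹ * (|x| ^ k * x ^ 2) := by
          rw [smul_eq_mul, ← sq_abs x, ← pow_add, ← abs_pow]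
          gcongr
          exact le_abs_self _
      _ ≤ (2 * 3 ^ k)⁻¹ * (b ^ k * x ^ 2) := by gcongr
      _ = x ^ 2 / 2 * (b / 3) ^ k := by
          rw [div_pow]
          field_simp
  have h := hasSum_le hterm htail hgeom
  simp only [Finset.sum_range_succ, Finset.sum_range_zero, Nat.factorial, pow_zero, pow_one,
    Nat.cast_one, inv_one, one_smul, zero_add, mul_one] at h
  rw [mul_inv, mul_right_comm, ← div_eq_inv_mul]
  linarith

variable {A : Type*} [NormedRing A] [NormOneClass A] [StarRing A] [NormedAlgebra ℝ A]
  [PartialOrder A] [StarOrderedRing A] [CompleteSpace A]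
  [ContinuousFunctionalCalculus ℝ A IsSelfAdjoint]

lemma le_smul_one_of_norm_le {a : A} {r : ℝ} (ha : IsSelfAdjoint a) (har : ‖a‖ ≤ r) :
    a ≤ r • 1 := by
  rw [← Algebra.algebraMap_eq_smul_one]
  exact le_algebraMap_of_spectrum_le fun x hx =>
    (Real.le_norm_self x).trans ((spectrum.norm_le_norm_of_mem hx).trans har)

lemma exp_le_bernstein {a : A} {b : ℝ} (ha : IsSelfAdjoint a) (hab : ‖a‖ ≤ b) (hb : b < 3) :
    exp a ≤ 1 + a + (2 * (1 - b / 3))⁻¹ • a ^ 2 := by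
  set κ := (2 * (1 - b / 3))⁻¹
  calc exp a = cfc Real.exp a := (CFC.real_exp_eq_normedSpace_exp ha).symm
    _ ≤ cfc (1 + Polynomial.X + Polynomial.C κ * Polynomial.X ^ 2 : Polynomial ℝ).eval a :=
        cfc_mono fun x hx => by
          simpa only [Polynomial.eval_add, Polynomial.eval_mul, Polynomial.eval_pow,
            Polynomial.eval_one, Polynomial.eval_X, Polynomial.eval_C] using
            real_exp_le_bernstein ((spectrum.norm_le_norm_of_mem hx).trans hab) hb
    _ = 1 + a + κ • a ^ 2 := by
        rw [cfc_polynomial _ a ha]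
        simp [Algebra.smul_def]

end ExpBound

section PosSemidef

instance matrixClosedIciTopology {m 𝕜 : Type*} [Finite m] [RCLike 𝕜] :
    ClosedIciTopology (Matrix m m 𝕜) where
  isClosed_Ici A := by
    have := Fintype.ofFinite m
    have hset : Set.Ici A = {B : Matrix m m 𝕜 | (B - A)ᴴ = B - A} ∩
        ⋂ x : m → 𝕜, {B | 0 ≤ star x ⬝ᵥ ((B - A) *ᵥ x)} := by
      ext B
      simp [Matrix.le_iff, Matrix.posSemidef_iff_dotProduct_mulVec, Matrix.IsHermitian]
    rw [hset]
    exact (isClosed_eq (by fun_prop) (by fun_prop)).inter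
      (isClosed_iInter fun x => isClosed_le continuous_const (by fun_prop))

variable {m 𝕜 : Type*} [Fintype m] [RCLike 𝕜]

lemma trace_mul_nonneg_of_posSemidef {A B : Matrix m m 𝕜} (hA : A.PosSemidef) (hB : B.PosSemidef) :
    0 ≤ (A * B).trace := by
  classical
  obtain ⟨C, rfl⟩ := CStarAlgebra.nonneg_iff_eq_star_mul_self.mp hA.nonneg
  rw [mul_assoc, Matrix.trace_mul_comm]
  exact (hB.mul_mul_conjTranspose_same C).trace_nonneg

lemma trace_mul_le_trace_mul_of_le {A B M : Matrix m m 𝕜} (hAB : A ≤ B) (hM : 0 ≤ M) :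
    (A * M).trace ≤ (B * M).trace := by
  rw [← sub_nonneg, ← Matrix.trace_sub, ← sub_mul]
  exact trace_mul_nonneg_of_posSemidef (Matrix.le_iff.mp hAB) (Matrix.nonneg_iff_posSemidef.mp hM)

variable [DecidableEq m]

lemma trace_cfc {A : Matrix m m 𝕜} (hA : A.IsHermitian) (f : ℝ → ℝ) :
    (cfc f A).trace = ∑ i, (f (hA.eigenvalues i) : 𝕜) := by
  rw [hA.cfc_eq, Matrix.IsHermitian.cfc, Unitary.conjStarAlgAut_apply, Matrix.trace_mul_cycle,
    Unitary.coe_star_mul_self, one_mul, Matrix.trace_diagonal]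
  rfl

lemma real_exp_le_trace_exp {A : Matrix m m ℝ} (hA : A.IsHermitian) {x : ℝ}
    (hx : x ∈ spectrum ℝ A) : Real.exp x ≤ (exp A).trace := by
  rw [hA.spectrum_real_eq_range_eigenvalues] at hx
  obtain ⟨i, rfl⟩ := hx
  rw [← CFC.real_exp_eq_normedSpace_exp hA.isSelfAdjoint, trace_cfc hA]
  exact Finset.single_le_sum (f := fun i => Real.exp (hA.eigenvalues i))
    (fun i _ => (Real.exp_pos _).le) (Finset.mem_univ i)

lemma exp_norm_le_trace_exp_add_trace_exp_neg [Nonempty m] {A : Matrix m m ℝ}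
    (hA : A.IsHermitian) : Real.exp ‖A‖ ≤ (exp A).trace + (exp (-A)).trace := by
  have trace_nonneg {B : Matrix m m ℝ} (hB : B.IsHermitian) : 0 ≤ (exp B).trace :=
    (Matrix.nonneg_iff_posSemidef.mp hB.isSelfAdjoint.exp_nonneg).trace_nonneg
  obtain ⟨x, hx, hxA⟩ := (IsometricContinuousFunctionalCalculus.isGreatest_norm_spectrum
    (𝕜 := ℝ) A hA.isSelfAdjoint).1
  rw [← hxA]
  rcases abs_choice x with habs | habs
  · simp only [Real.norm_eq_abs, habs]
    linarith [real_exp_le_trace_exp hA hx, trace_nonneg hA.neg]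
  · simp only [Real.norm_eq_abs, habs]
    have hx_neg : -x ∈ spectrum ℝ (-A) := by simpa only [← spectrum.neg_eq, Set.neg_mem_neg]
    linarith [real_exp_le_trace_exp hA.neg hx_neg, trace_nonneg hA]

end PosSemidef

section Bernstein

variable {Ω ι m : Type*} [Fintype m] [DecidableEq m] {mΩ : MeasurableSpace Ω} {P : Measure Ω}

lemma integrable_trace {f : Ω → Matrix m m ℝ} (hf : Integrable f P) :
    Integrable (fun ω => (f ω).trace) P :=
  (Matrix.traceLinearMap m ℝ ℝ).toContinuousLinearMap.integrable_comp hf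

lemma trace_integral {f : Ω → Matrix m m ℝ} (hf : Integrable f P) :
    (∫ ω, f ω ∂P).trace = ∫ ω, (f ω).trace ∂P :=
  ((Matrix.traceLinearMap m ℝ ℝ).toContinuousLinearMap.integral_comp_comm hf).symm

variable [IsProbabilityMeasure P]

lemma integrable_exp_of_norm_le {A : Type*} [NormedRing A] [NormOneClass A] [NormedAlgebra ℝ A]
    [CompleteSpace A] {X : Ω → A} {b : ℝ} (hX : AEStronglyMeasurable X P)
    (hb : ∀ᵐ ω ∂P, ‖X ω‖ ≤ b) : Integrable (fun ω => exp (X ω)) P := by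
  let _ := NormedAlgebra.restrictScalars ℚ ℝ A
  refine Integrable.of_bound (exp_continuous.comp_aestronglyMeasurable hX) (Real.exp b) ?_
  filter_upwards [hb] with ω hω
  exact (norm_exp_le_exp_norm _).trans (Real.exp_le_exp.mpr hω)

lemma integral_exp_le_of_norm_le [Nonempty m] {X : Ω → Matrix m m ℝ} {b v : ℝ}
    (hX : AEStronglyMeasurable X P) (hherm : ∀ᵐ ω ∂P, (X ω).IsHermitian)
    (hb : ∀ᵐ ω ∂P, ‖X ω‖ ≤ b) (hb3 : b < 3) (hmean : ∫ ω, X ω ∂P = 0)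
    (hvar : ‖∫ ω, X ω ^ 2 ∂P‖ ≤ v) :
    ∫ ω, exp (X ω) ∂P ≤ Real.exp ((2 * (1 - b / 3))⁻¹ * v) • 1 := by
  set κ := (2 * (1 - b / 3))⁻¹
  have hκ : 0 ≤ κ := inv_nonneg.mpr (by linarith)
  have hint : Integrable X P := .of_bound hX b hb
  have hlin : Integrable (fun ω => 1 + X ω) P := (integrable_const 1).add hint
  have hint₂ : Integrable (fun ω => X ω ^ 2) P := by
    refine .of_bound (hX.pow 2) (b ^ 2) ?_
    filter_upwards [hb] with ω hω
    exact (norm_pow_le _ 2).trans (by gcongr)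
  have hquad : Integrable (fun ω => κ • X ω ^ 2) P := hint₂.smul κ
  have hsq : ∫ ω, X ω ^ 2 ∂P ≤ v • (1 : Matrix m m ℝ) := by
    have hnonneg : 0 ≤ ∫ ω, X ω ^ 2 ∂P := by
      refine integral_nonneg_of_ae ?_
      filter_upwards [hherm] with ω hω
      exact hω.isSelfAdjoint.sq_nonneg
    exact le_smul_one_of_norm_le (.of_nonneg hnonneg) hvar
  calc ∫ ω, exp (X ω) ∂P
      ≤ ∫ ω, (1 + X ω + κ • X ω ^ 2) ∂P := by
        refine integral_mono_ae (integrable_exp_of_norm_le hX hb) (hlin.add hquad) ?_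
        filter_upwards [hherm, hb] with ω hω hωb
        exact exp_le_bernstein hω hωb hb3
    _ = 1 + κ • ∫ ω, X ω ^ 2 ∂P := by
        rw [integral_add hlin hquad, integral_add (integrable_const 1) hint,
          integral_smul, hmean, integral_const, probReal_univ, one_smul, add_zero]
    _ ≤ 1 + κ • v • 1 := add_le_add_right (smul_le_smul_of_nonneg_left hsq hκ) 1
    _ = (κ * v + 1) • 1 := by rw [smul_smul, add_smul, one_smul, add_comm]
    _ ≤ Real.exp (κ * v) • 1 := smul_le_smul_of_nonneg_right (Real.add_one_le_exp _) zero_le_one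

variable [MeasurableSpace (Matrix m m ℝ)] [BorelSpace (Matrix m m ℝ)]

lemma trace_integral_exp_add_le [Nonempty m] {X Y : Ω → Matrix m m ℝ} {b c : ℝ}
    (hXY : IndepFun X Y P) (hX : AEMeasurable X P) (hY : AEMeasurable Y P)
    (hXherm : ∀ᵐ ω ∂P, (X ω).IsHermitian) (hYherm : ∀ᵐ ω ∂P, (Y ω).IsHermitian)
    (hXb : ∀ᵐ ω ∂P, ‖X ω‖ ≤ b) (hYc : ∀ᵐ ω ∂P, ‖Y ω‖ ≤ c) :
    (∫ ω, exp (X ω + Y ω) ∂P).trace ≤ ((∫ ω, exp (X ω) ∂P) * ∫ ω, exp (Y ω) ∂P).trace := by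
  let _ := NormedAlgebra.restrictScalars ℚ ℝ (Matrix m m ℝ)
  have hexp : Measurable (exp : Matrix m m ℝ → Matrix m m ℝ) := exp_continuous.measurable
  have hindep : IndepFun (fun ω => exp (X ω)) (fun ω => exp (Y ω)) P := hXY.comp hexp hexp
  have hintX := integrable_exp_of_norm_le hX.aestronglyMeasurable hXb
  have hintY := integrable_exp_of_norm_le hY.aestronglyMeasurable hYc
  have hintXY : Integrable (fun ω => exp (X ω) * exp (Y ω)) P :=
    hindep.integrable_bilin hintX hintY (.mul ℝ (Matrix m m ℝ))
  have hintsum : Integrable (fun ω => exp (X ω + Y ω)) P := by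
    refine integrable_exp_of_norm_le (b := b + c) (hX.add hY).aestronglyMeasurable ?_
    filter_upwards [hXb, hYc] with ω hωX hωY using norm_add_le_of_le hωX hωY
  calc (∫ ω, exp (X ω + Y ω) ∂P).trace
      = ∫ ω, (exp (X ω + Y ω)).trace ∂P := trace_integral hintsum
    _ ≤ ∫ ω, (exp (X ω) * exp (Y ω)).trace ∂P := by
        refine integral_mono_ae (integrable_trace hintsum) (integrable_trace hintXY) ?_
        filter_upwards [hXherm, hYherm] with ω hωX hωY using golden_thompson hωX hωY
    _ = (∫ ω, exp (X ω) * exp (Y ω) ∂P).trace := (trace_integral hintXY).symm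
    _ = ((∫ ω, exp (X ω) ∂P) * ∫ ω, exp (Y ω) ∂P).trace :=
        congrArg Matrix.trace (hindep.integral_bilin hintX hintY (.mul ℝ (Matrix m m ℝ)))

lemma trace_integral_exp_sum_le [Nonempty m] {X : ι → Ω → Matrix m m ℝ} {b c : ι → ℝ}
    (hindep : iIndepFun X P) (hmeas : ∀ i, AEMeasurable (X i) P)
    (hherm : ∀ i, ∀ᵐ ω ∂P, (X i ω).IsHermitian) (hb : ∀ i, ∀ᵐ ω ∂P, ‖X i ω‖ ≤ b i)
    (hc₀ : ∀ i, 0 ≤ c i) (hc : ∀ i, ∫ ω, exp (X i ω) ∂P ≤ c i • 1) (s : Finset ι) :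
    (∫ ω, exp (∑ i ∈ s, X i ω) ∂P).trace ≤ Fintype.card m * ∏ i ∈ s, c i := by
  classical
  induction s using Finset.induction_on with
  | empty => simp
  | insert i s his ih =>
    have hall : ∀ᵐ ω ∂P, ∀ j ∈ s, (X j ω).IsHermitian ∧ ‖X j ω‖ ≤ b j :=
      (ae_ball_iff s.countable_toSet).mpr fun j _ => (hherm j).and (hb j)
    have hSherm : ∀ᵐ ω ∂P, (∑ j ∈ s, X j ω).IsHermitian := by
      filter_upwards [hall] with ω hω using isSelfAdjoint_sum s fun j hj => (hω j hj).1
    have hSb : ∀ᵐ ω ∂P, ‖∑ j ∈ s, X j ω‖ ≤ ∑ j ∈ s, b j := by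
      filter_upwards [hall] with ω hω using norm_sum_le_of_le s fun j hj => (hω j hj).2
    have hSmeas : AEMeasurable (fun ω => ∑ j ∈ s, X j ω) P :=
      Finset.aemeasurable_fun_sum s fun j _ => hmeas j
    have hindepS : IndepFun (X i) (fun ω => ∑ j ∈ s, X j ω) P := by
      simpa only [Finset.sum_fn] using (hindep.indepFun_finsetSum_of_notMem₀ hmeas his).symm
    have hexpS : 0 ≤ ∫ ω, exp (∑ j ∈ s, X j ω) ∂P := by
      refine integral_nonneg_of_ae ?_
      filter_upwards [hSherm] with ω hω using hω.isSelfAdjoint.exp_nonneg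
    calc (∫ ω, exp (∑ j ∈ insert i s, X j ω) ∂P).trace
        = (∫ ω, exp (X i ω + ∑ j ∈ s, X j ω) ∂P).trace := by simp only [Finset.sum_insert his]
      _ ≤ ((∫ ω, exp (X i ω) ∂P) * ∫ ω, exp (∑ j ∈ s, X j ω) ∂P).trace :=
          trace_integral_exp_add_le hindepS (hmeas i) hSmeas (hherm i) hSherm (hb i) hSb
      _ ≤ ((c i • 1) * ∫ ω, exp (∑ j ∈ s, X j ω) ∂P).trace :=
          trace_mul_le_trace_mul_of_le (hc i) hexpS
      _ = c i * (∫ ω, exp (∑ j ∈ s, X j ω) ∂P).trace := by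
          rw [smul_mul_assoc, one_mul, Matrix.trace_smul, smul_eq_mul]
      _ ≤ c i * (Fintype.card m * ∏ j ∈ s, c j) := mul_le_mul_of_nonneg_left ih (hc₀ i)
      _ = Fintype.card m * ∏ j ∈ insert i s, c j := by
          rw [Finset.prod_insert his, mul_left_comm]

lemma measureReal_le_norm_le_trace_integral_exp [Nonempty m] {S : Ω → Matrix m m ℝ} {b θ t : ℝ}
    (hS : AEMeasurable S P) (hherm : ∀ᵐ ω ∂P, (S ω).IsHermitian) (hb : ∀ᵐ ω ∂P, ‖S ω‖ ≤ b)
    (hθ : 0 ≤ θ) :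
    P.real {ω | t ≤ ‖S ω‖} ≤ Real.exp (-(θ * t)) *
      ((∫ ω, exp (θ • S ω) ∂P).trace + (∫ ω, exp (-θ • S ω) ∂P).trace) := by
  have hint (s : ℝ) : Integrable (fun ω => exp (s • S ω)) P := by
    refine integrable_exp_of_norm_le (b := |s| * b) (hS.const_smul s).aestronglyMeasurable ?_
    filter_upwards [hb] with ω hω
    rw [norm_smul, Real.norm_eq_abs]
    gcongr
  have hintθ := integrable_trace (hint θ)
  have hintneg := integrable_trace (hint (-θ))
  have hlower : ∀ᵐ ω ∂P, Real.exp (θ * ‖S ω‖) ≤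
      (exp (θ • S ω)).trace + (exp (-θ • S ω)).trace := by
    filter_upwards [hherm] with ω hω
    simpa only [norm_smul, Real.norm_of_nonneg hθ, neg_smul] using
      exp_norm_le_trace_exp_add_trace_exp_neg (hω.smul (IsSelfAdjoint.all θ))
  have hmarkov : Real.exp (θ * t) * P.real {ω | t ≤ ‖S ω‖} ≤
      ∫ ω, ((exp (θ • S ω)).trace + (exp (-θ • S ω)).trace) ∂P := by
    have hnonneg := hlower.mono fun ω hω => (Real.exp_pos _).le.trans hω
    refine le_trans (mul_le_mul_of_nonneg_left (ENNReal.toReal_mono (measure_ne_top _ _)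
      (measure_mono_ae ?_)) (Real.exp_pos _).le)
      (mul_meas_ge_le_integral_of_nonneg hnonneg (hintθ.add hintneg) (Real.exp (θ * t)))
    filter_upwards [hlower] with ω hω (hωt : t ≤ ‖S ω‖)
    exact (Real.exp_le_exp.mpr (mul_le_mul_of_nonneg_left hωt hθ)).trans hω
  rw [Real.exp_neg, ← div_eq_inv_mul, le_div_iff₀' (Real.exp_pos _), trace_integral (hint θ),
    trace_integral (hint (-θ)), ← integral_add hintθ hintneg]
  exact hmarkov

lemma trace_integral_exp_smul_sum_le [Nonempty m] [Fintype ι] {X : ι → Ω → Matrix m m ℝ} {b : ℝ}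
    {v : ι → ℝ} (hindep : iIndepFun X P) (hmeas : ∀ i, AEMeasurable (X i) P)
    (hherm : ∀ i, ∀ᵐ ω ∂P, (X i ω).IsHermitian) (hb : ∀ i, ∀ᵐ ω ∂P, ‖X i ω‖ ≤ b)
    (hmean : ∀ i, ∫ ω, X i ω ∂P = 0) (hvar : ∀ i, ‖∫ ω, X i ω ^ 2 ∂P‖ ≤ v i) {θ : ℝ}
    (hθb : |θ| * b < 3) :
    (∫ ω, exp (θ • ∑ i, X i ω) ∂P).trace ≤
      Fintype.card m * Real.exp ((2 * (1 - |θ| * b / 3))⁻¹ * (θ ^ 2 * ∑ i, v i)) := by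
  have hθmeas (i : ι) : AEMeasurable (fun ω => θ • X i ω) P := (hmeas i).const_smul θ
  have hθherm (i : ι) : ∀ᵐ ω ∂P, (θ • X i ω).IsHermitian := by
    filter_upwards [hherm i] with ω hω using hω.smul (IsSelfAdjoint.all θ)
  have hθbound (i : ι) : ∀ᵐ ω ∂P, ‖θ • X i ω‖ ≤ |θ| * b := by
    filter_upwards [hb i] with ω hω
    rw [norm_smul, Real.norm_eq_abs]
    gcongr
  have hθmean (i : ι) : ∫ ω, θ • X i ω ∂P = 0 := by rw [integral_smul, hmean, smul_zero]
  have hθvar (i : ι) : ‖∫ ω, (θ • X i ω) ^ 2 ∂P‖ ≤ θ ^ 2 * v i := by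
    simp only [smul_pow, integral_smul]
    rw [norm_smul, Real.norm_of_nonneg (sq_nonneg θ)]
    exact mul_le_mul_of_nonneg_left (hvar i) (sq_nonneg θ)
  have hθindep : iIndepFun (fun i ω => θ • X i ω) P :=
    hindep.comp (fun _ M => θ • M) fun _ => measurable_const_smul θ
  simpa only [← Finset.smul_sum, ← Real.exp_sum, ← Finset.mul_sum] using
    trace_integral_exp_sum_le hθindep hθmeas hθherm hθbound (fun _ => (Real.exp_pos _).le)
      (fun i => integral_exp_le_of_norm_le (hθmeas i).aestronglyMeasurable (hθherm i)
        (hθbound i) hθb (hθmean i) (hθvar i)) Finset.univ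

lemma exists_bernstein_parameter {V b t : ℝ} (hV : 0 < V) (hb : 0 ≤ b) (ht : 0 ≤ t) :
    ∃ θ, 0 ≤ θ ∧ θ * b < 3 ∧ -(θ * t) + (2 * (1 - θ * b / 3))⁻¹ * (θ ^ 2 * V) =
      -(t ^ 2 / 2 / (V + b * t / 3)) := by
  have hden : 0 < V + b * t / 3 := by positivity
  have hcompl : 1 - t / (V + b * t / 3) * b / 3 = V / (V + b * t / 3) := by
    field_simp
    ring
  refine ⟨t / (V + b * t / 3), by positivity, ?_, ?_⟩
  · linarith [hcompl.symm ▸ div_pos hV hden]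
  · rw [hcompl]
    field_simp
    ring

theorem matrix_bernstein [Nonempty m] [Fintype ι] {X : ι → Ω → Matrix m m ℝ} {b t : ℝ} {v : ι → ℝ}
    (hindep : iIndepFun X P) (hmeas : ∀ i, AEMeasurable (X i) P)
    (hherm : ∀ i, ∀ᵐ ω ∂P, (X i ω).IsHermitian) (hb : ∀ i, ∀ᵐ ω ∂P, ‖X i ω‖ ≤ b)
    (hmean : ∀ i, ∫ ω, X i ω ∂P = 0) (hvar : ∀ i, ‖∫ ω, X i ω ^ 2 ∂P‖ ≤ v i)
    (hv : 0 < ∑ i, v i) (ht : 0 ≤ t) :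
    P.real {ω | t ≤ ‖∑ i, X i ω‖} ≤
      2 * Fintype.card m * Real.exp (-(t ^ 2 / 2 / (∑ i, v i + b * t / 3))) := by
  have hb₀ : 0 ≤ b := by
    obtain ⟨i, -⟩ := Finset.nonempty_of_sum_ne_zero hv.ne'
    obtain ⟨ω, hω⟩ := (hb i).exists
    exact (norm_nonneg _).trans hω
  obtain ⟨θ, hθ₀, hθb, hexponent⟩ := exists_bernstein_parameter hv hb₀ ht
  have hherm_sum : ∀ᵐ ω ∂P, (∑ i, X i ω).IsHermitian := by
    filter_upwards [ae_all_iff.mpr hherm] with ω hω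
    exact isSelfAdjoint_sum Finset.univ fun i _ => hω i
  have hb_sum : ∀ᵐ ω ∂P, ‖∑ i, X i ω‖ ≤ ∑ _ : ι, b := by
    filter_upwards [ae_all_iff.mpr hb] with ω hω
    exact norm_sum_le_of_le Finset.univ fun i _ => hω i
  have htrace (σ : ℝ) (hσ : |σ| = θ) : (∫ ω, exp (σ • ∑ i, X i ω) ∂P).trace ≤
      Fintype.card m * Real.exp ((2 * (1 - θ * b / 3))⁻¹ * (θ ^ 2 * ∑ i, v i)) := by
    rw [← hσ, sq_abs]
    exact trace_integral_exp_smul_sum_le hindep hmeas hherm hb hmean hvar (hσ ▸ hθb)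
  calc P.real {ω | t ≤ ‖∑ i, X i ω‖}
      ≤ Real.exp (-(θ * t)) * ((∫ ω, exp (θ • ∑ i, X i ω) ∂P).trace +
          (∫ ω, exp (-θ • ∑ i, X i ω) ∂P).trace) :=
        measureReal_le_norm_le_trace_integral_exp
          (Finset.aemeasurable_fun_sum Finset.univ fun i _ => hmeas i) hherm_sum hb_sum hθ₀
    _ ≤ Real.exp (-(θ * t)) * (2 *
          (Fintype.card m * Real.exp ((2 * (1 - θ * b / 3))⁻¹ * (θ ^ 2 * ∑ i, v i)))) := by
        rw [two_mul]
        gcongr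
        · exact htrace θ (abs_of_nonneg hθ₀)
        · exact htrace (-θ) (by rw [abs_neg, abs_of_nonneg hθ₀])
    _ = 2 * Fintype.card m * Real.exp (-(t ^ 2 / 2 / (∑ i, v i + b * t / 3))) := by
        rw [← hexponent, Real.exp_add]
        ring

end Bernstein

section OperatorBernstein

variable {Ω ι m : Type*} [Fintype ι] [Fintype m] [Nonempty m]
  {mΩ : MeasurableSpace Ω} {P : Measure Ω} [IsProbabilityMeasure P]

theorem operator_bernstein
    {X : ι → Ω → EuclideanSpace ℝ m →L[ℝ] EuclideanSpace ℝ m} {b t : ℝ} {v : ι → ℝ}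
    (hindep : iIndepFun X P) (hmeas : ∀ i, AEMeasurable (X i) P)
    (hsa : ∀ i, ∀ᵐ ω ∂P, IsSelfAdjoint (X i ω)) (hb : ∀ i, ∀ᵐ ω ∂P, ‖X i ω‖ ≤ b)
    (hmean : ∀ i, ∫ ω, X i ω ∂P = 0) (hvar : ∀ i, ‖∫ ω, X i ω ^ 2 ∂P‖ ≤ v i)
    (hv : 0 < ∑ i, v i) (ht : 0 ≤ t) :
    P.real {ω | t ≤ ‖∑ i, X i ω‖} ≤
      2 * Fintype.card m * Real.exp (-(t ^ 2 / 2 / (∑ i, v i + b * t / 3))) := by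
  classical
  borelize (Matrix m m ℝ)
  let φ := (Matrix.toEuclideanCLM (n := m) (𝕜 := ℝ)).symm
  let L : (EuclideanSpace ℝ m →L[ℝ] EuclideanSpace ℝ m) ≃ₗᵢ[ℝ] Matrix m m ℝ :=
    { φ.toAlgEquiv.toLinearEquiv with
      norm_map' := fun T => (Matrix.l2_opNorm_toEuclideanCLM (φ T)).symm.trans
        (congrArg norm (φ.symm_apply_apply T)) }
  have hL : Measurable L := L.continuous.measurable
  have hLint (f : Ω → EuclideanSpace ℝ m →L[ℝ] EuclideanSpace ℝ m) :
      ∫ ω, L (f ω) ∂P = L (∫ ω, f ω ∂P) :=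
    L.toContinuousLinearEquiv.integral_comp_comm f
  have hLsq (T) : L T ^ 2 = L (T ^ 2) := (map_pow φ T 2).symm
  have hbern := matrix_bernstein (X := fun i ω => L (X i ω)) (hindep.comp (fun _ => L) fun _ => hL)
    (fun i => hL.comp_aemeasurable (hmeas i))
    (fun i => (hsa i).mono fun ω hω =>
      (φ.map_star' (X i ω)).symm.trans (congrArg φ hω.star_eq))
    (fun i => by simpa only [L.norm_map] using hb i)
    (fun i => by rw [hLint, hmean, map_zero])
    (fun i => by simpa only [hLsq, hLint, L.norm_map] using hvar i) hv ht
  simpa only [← map_sum, L.norm_map] using hbern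

end OperatorBernstein

section RankOne

variable {E : Type*} [NormedAddCommGroup E] [InnerProductSpace ℝ E]

lemma rankOne_self_sub_smul_one_sq (x : E) (c : ℝ) :
    (rankOne ℝ x x - c • 1) ^ 2 = (‖x‖ ^ 2 - 2 * c) • rankOne ℝ x x + c ^ 2 • 1 := by
  ext v
  simp only [sq, mul_apply_eq_comp, sub_apply, add_apply, smul_apply, one_apply_eq_self,
    rankOne_apply, inner_sub_right, real_inner_smul_right, real_inner_self_eq_norm_mul_norm]
  module

lemma norm_rankOne_self_sub_smul_one_le {x : E} {c : ℝ} (hc : 0 ≤ c) (hcx : 2 * c ≤ ‖x‖ ^ 2) :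
    ‖rankOne ℝ x x - c • 1‖ ≤ ‖x‖ ^ 2 - c := by
  refine ContinuousLinearMap.opNorm_le_bound _ (by linarith) fun v => ?_
  refine (sq_le_sq₀ (norm_nonneg _) (mul_nonneg (by linarith) (norm_nonneg v))).mp ?_
  have hexpand : ‖(rankOne ℝ x x - c • 1) v‖ ^ 2 =
      (‖x‖ ^ 2 - 2 * c) * ⟪x, v⟫_ℝ ^ 2 + c ^ 2 * ‖v‖ ^ 2 := by
    simp only [sub_apply, smul_apply, one_apply_eq_self, rankOne_apply, norm_sub_sq_real,
      norm_smul, Real.norm_eq_abs, mul_pow, sq_abs, real_inner_smul_left, real_inner_smul_right]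
    ring
  have hcauchy : ⟪x, v⟫_ℝ ^ 2 ≤ (‖x‖ * ‖v‖) ^ 2 := sq_le_sq.mpr (by
    simpa [abs_mul] using abs_real_inner_le_norm x v)
  calc ‖(rankOne ℝ x x - c • 1) v‖ ^ 2
      ≤ (‖x‖ ^ 2 - 2 * c) * (‖x‖ * ‖v‖) ^ 2 + c ^ 2 * ‖v‖ ^ 2 := by
        rw [hexpand]
        gcongr
    _ = ((‖x‖ ^ 2 - c) * ‖v‖) ^ 2 := by ring

end RankOne

section Isotropy

variable {E : Type*} [NormedAddCommGroup E] [InnerProductSpace ℝ E]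

lemma continuous_rankOne_self : Continuous fun y : E => rankOne ℝ y y :=
  (rankOne ℝ).continuous.clm_apply continuous_id

variable [MeasurableSpace E] [BorelSpace E] {μ : Measure E}

lemma integral_inner_sq_eq_of_norm_eq (hinv : ∀ Q : E ≃ₗᵢ[ℝ] E, μ.map Q = μ) {u v : E}
    (huv : ‖u‖ = ‖v‖) : ∫ y, ⟪y, u⟫_ℝ ^ 2 ∂μ = ∫ y, ⟪y, v⟫_ℝ ^ 2 ∂μ := by
  set Q := Submodule.reflection (ℝ ∙ (u - v))ᗮ
  have hQ : Q u = v := Submodule.reflection_sub huv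
  calc ∫ y, ⟪y, u⟫_ℝ ^ 2 ∂μ = ∫ y, ⟪Q y, v⟫_ℝ ^ 2 ∂μ := by
        simp only [← hQ, LinearIsometryEquiv.inner_map_map]
    _ = ∫ y, ⟪y, v⟫_ℝ ^ 2 ∂μ.map Q :=
        (integral_map_equiv Q.toHomeomorph.toMeasurableEquiv fun y => ⟪y, v⟫_ℝ ^ 2).symm
    _ = ∫ y, ⟪y, v⟫_ℝ ^ 2 ∂μ := by rw [hinv Q]

variable [FiniteDimensional ℝ E]

lemma finrank_mul_integral_inner_sq (hinv : ∀ Q : E ≃ₗᵢ[ℝ] E, μ.map Q = μ)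
    (hint : Integrable (fun y => ‖y‖ ^ 2) μ) (u : E) :
    Module.finrank ℝ E * ∫ y, ⟪y, u⟫_ℝ ^ 2 ∂μ = (∫ y, ‖y‖ ^ 2 ∂μ) * ‖u‖ ^ 2 := by
  set e := stdOrthonormalBasis ℝ E
  have hint_inner (i) : Integrable (fun y => ⟪y, e i⟫_ℝ ^ 2) μ := by
    refine hint.mono' (by fun_prop) (.of_forall fun y => ?_)
    rw [Real.norm_of_nonneg (sq_nonneg _), ← e.sum_sq_inner_left y]
    exact Finset.single_le_sum (f := fun i => ⟪y, e i⟫_ℝ ^ 2) (fun i _ => sq_nonneg _)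
      (Finset.mem_univ i)
  have hscale (i) : ∫ y, ⟪y, u⟫_ℝ ^ 2 ∂μ = (∫ y, ⟪y, e i⟫_ℝ ^ 2 ∂μ) * ‖u‖ ^ 2 := by
    rw [integral_inner_sq_eq_of_norm_eq hinv (v := ‖u‖ • e i) (by simp [norm_smul]),
      ← integral_mul_const]
    simp only [inner_smul_right, mul_pow, mul_comm]
  calc Module.finrank ℝ E * ∫ y, ⟪y, u⟫_ℝ ^ 2 ∂μ
      = ∑ i, (∫ y, ⟪y, e i⟫_ℝ ^ 2 ∂μ) * ‖u‖ ^ 2 := by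
        simp only [← hscale, Finset.sum_const, Finset.card_univ, Fintype.card_fin, nsmul_eq_mul]
    _ = (∫ y, ‖y‖ ^ 2 ∂μ) * ‖u‖ ^ 2 := by
        rw [← Finset.sum_mul, ← integral_finsetSum _ fun i _ => hint_inner i]
        simp only [e.sum_sq_inner_left]

lemma finrank_smul_integral_rankOne_self (hinv : ∀ Q : E ≃ₗᵢ[ℝ] E, μ.map Q = μ)
    (hint : Integrable (fun y => ‖y‖ ^ 2) μ) :
    (Module.finrank ℝ E : ℝ) • ∫ y, rankOne ℝ y y ∂μ = (∫ y, ‖y‖ ^ 2 ∂μ) • 1 := by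
  have hint_rankOne : Integrable (fun y : E => rankOne ℝ y y) μ := by
    refine hint.mono' continuous_rankOne_self.aestronglyMeasurable (.of_forall fun y => ?_)
    rw [norm_rankOne, sq]
  have hinner (u v : E) :
      ⟪(∫ y, rankOne ℝ y y ∂μ) u, v⟫_ℝ = ∫ y, ⟪y, u⟫_ℝ * ⟪y, v⟫_ℝ ∂μ := by
    rw [ContinuousLinearMap.integral_apply hint_rankOne, ← real_inner_comm,
      ← integral_inner (hint_rankOne.apply_continuousLinearMap u)]
    simp only [rankOne_apply, inner_smul_right, real_inner_comm v]
  have hsymm : ((Module.finrank ℝ E : ℝ) • ∫ y, rankOne ℝ y y ∂μ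
      - (∫ y, ‖y‖ ^ 2 ∂μ) • (1 : E →L[ℝ] E)).toLinearMap.IsSymmetric := fun u v => by
    simp [inner_sub_left, inner_smul_left, hinner, real_inner_comm _ u, mul_comm]
  have hquad (u : E) : ⟪((Module.finrank ℝ E : ℝ) • ∫ y, rankOne ℝ y y ∂μ
      - (∫ y, ‖y‖ ^ 2 ∂μ) • (1 : E →L[ℝ] E)) u, u⟫_ℝ = 0 := by
    simp [inner_sub_left, inner_smul_left, hinner, ← sq, finrank_mul_integral_inner_sq hinv hint]
  exact sub_eq_zero.mp
    (ContinuousLinearMap.coe_injective (hsymm.inner_map_self_eq_zero.mp hquad))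

end Isotropy

section IsotropicRankOne

variable {E : Type*} [NormedAddCommGroup E] [InnerProductSpace ℝ E] [MeasurableSpace E]
  [BorelSpace E] [FiniteDimensional ℝ E] {μ : Measure E} [IsProbabilityMeasure μ]

lemma integrable_rankOne_self_of_norm_sq_eq {r : ℝ} (hnorm : ∀ᵐ y ∂μ, ‖y‖ ^ 2 = r) :
    Integrable (fun y => rankOne ℝ y y) μ := by
  refine .of_bound continuous_rankOne_self.aestronglyMeasurable r ?_
  filter_upwards [hnorm] with y hy
  rw [norm_rankOne, ← sq, hy]

lemma integral_rankOne_self_sub_smul_one {c r : ℝ} (hnorm : ∀ᵐ y ∂μ, ‖y‖ ^ 2 = r)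
    (hiso : ∫ y, rankOne ℝ y y ∂μ = c • 1) : ∫ y, (rankOne ℝ y y - c • 1) ∂μ = 0 := by
  rw [integral_sub (integrable_rankOne_self_of_norm_sq_eq hnorm) (integrable_const _), hiso,
    integral_const, probReal_univ, one_smul, sub_self]

lemma integral_rankOne_self_sub_smul_one_sq {c r : ℝ} (hnorm : ∀ᵐ y ∂μ, ‖y‖ ^ 2 = r)
    (hiso : ∫ y, rankOne ℝ y y ∂μ = c • 1) :
    ∫ y, (rankOne ℝ y y - c • 1) ^ 2 ∂μ = (c * (r - c)) • 1 := by
  calc ∫ y, (rankOne ℝ y y - c • 1) ^ 2 ∂μ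
      = ∫ y, ((r - 2 * c) • rankOne ℝ y y + c ^ 2 • 1) ∂μ := by
        refine integral_congr_ae ?_
        filter_upwards [hnorm] with y hy
        rw [rankOne_self_sub_smul_one_sq, hy]
    _ = (r - 2 * c) • c • 1 + c ^ 2 • 1 := by
        have hint : Integrable (fun y => (r - 2 * c) • rankOne ℝ y y) μ :=
          (integrable_rankOne_self_of_norm_sq_eq hnorm).smul (r - 2 * c)
        rw [integral_add hint (integrable_const _), integral_smul, hiso, integral_const,
          probReal_univ, one_smul]
    _ = (c * (r - c)) • 1 := by
        rw [smul_smul, ← add_smul]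
        ring_nf

lemma integral_rankOne_self_of_rotation_invariant [Nontrivial E] {r : ℝ}
    (hnorm : ∀ᵐ y ∂μ, ‖y‖ ^ 2 = r) (hinv : ∀ Q : E ≃ₗᵢ[ℝ] E, μ.map Q = μ) :
    ∫ y, rankOne ℝ y y ∂μ = (r / Module.finrank ℝ E) • 1 := by
  have hint : Integrable (fun y => ‖y‖ ^ 2) μ :=
    (integrable_const r).congr (hnorm.mono fun y hy => hy.symm)
  have hr : ∫ y, ‖y‖ ^ 2 ∂μ = r := by
    rw [integral_congr_ae hnorm, integral_const, probReal_univ, one_smul]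
  have hdim : (Module.finrank ℝ E : ℝ) ≠ 0 := Nat.cast_ne_zero.mpr Module.finrank_pos.ne'
  rw [div_eq_inv_mul, ← smul_smul, ← hr, ← finrank_smul_integral_rankOne_self hinv hint,
    inv_smul_smul₀ hdim]

end IsotropicRankOne

lemma ae_norm_sq_eq_of_measure_sphere_sqrt_eq_one {E : Type*} [SeminormedAddCommGroup E]
    [MeasurableSpace E] [OpensMeasurableSpace E] {μ : Measure E} [IsProbabilityMeasure μ] {r : ℝ}
    (hr : 0 ≤ r) (hμ : μ (Metric.sphere 0 √r) = 1) : ∀ᵐ y ∂μ, ‖y‖ ^ 2 = r := by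
  filter_upwards [(mem_ae_iff_prob_eq_one Metric.isClosed_sphere.measurableSet).mpr hμ] with y hy
  rw [mem_sphere_zero_iff_norm.mp hy, Real.sq_sqrt hr]

lemma integral_rankOne_self_of_rotation_invariant_of_norm_sq_eq_div {d n : ℕ} (hd : d ≠ 0)
    {μ : Measure (EuclideanSpace ℝ (Fin d))} [IsProbabilityMeasure μ]
    (hnorm : ∀ᵐ y ∂μ, ‖y‖ ^ 2 = d / n)
    (hinv : ∀ Q : EuclideanSpace ℝ (Fin d) ≃ₗᵢ[ℝ] EuclideanSpace ℝ (Fin d), μ.map Q = μ) :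
    ∫ y, rankOne ℝ y y ∂μ = (n : ℝ)⁻¹ • 1 := by
  have : NeZero d := ⟨hd⟩
  have h := integral_rankOne_self_of_rotation_invariant hnorm hinv
  rw [h, finrank_euclideanSpace_fin, div_right_comm, div_self (by positivity), one_div]

theorem rankOne_sum_concentration {ι m : Type*} [Fintype ι] [Nonempty ι] [Fintype m]
    [Nonempty m] {μ : ι → Measure (EuclideanSpace ℝ m)}
    [∀ i, IsProbabilityMeasure (μ i)] {c r t : ℝ} (hc : 0 < c) (hcr : 2 * c ≤ r)
    (hnorm : ∀ i, ∀ᵐ y ∂μ i, ‖y‖ ^ 2 = r) (hiso : ∀ i, ∫ y, rankOne ℝ y y ∂μ i = c • 1)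
    (ht : 0 ≤ t) :
    (Measure.pi μ).real {x | t ≤ ‖∑ i, (rankOne ℝ (x i) (x i) - c • 1)‖} ≤
      2 * Fintype.card m *
        Real.exp (-(t ^ 2 / 2 / (Fintype.card ι * (c * (r - c)) + (r - c) * t / 3))) := by
  set Y : EuclideanSpace ℝ m → EuclideanSpace ℝ m →L[ℝ] EuclideanSpace ℝ m :=
    fun y => rankOne ℝ y y - c • 1
  have hvpos : 0 < c * (r - c) := mul_pos hc (by linarith)
  have hY : Continuous Y := continuous_rankOne_self.sub continuous_const
  have hindep : iIndepFun (fun i x => Y (x i)) (Measure.pi μ) :=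
    iIndepFun_pi fun i => hY.measurable.aemeasurable
  have hmeas (i) : AEMeasurable (fun x => Y (x i)) (Measure.pi μ) :=
    (hY.measurable.comp (measurable_pi_apply i)).aemeasurable
  have hsa (y) : IsSelfAdjoint (Y y) :=
    (isPositive_rankOne_self y).isSelfAdjoint.sub ((IsSelfAdjoint.all c).smul (.one _))
  have hbound (i) : ∀ᵐ x ∂Measure.pi μ, ‖Y (x i)‖ ≤ r - c := by
    filter_upwards [(measurePreserving_eval μ i).quasiMeasurePreserving.ae (hnorm i)] with x hx
    simpa only [hx] using norm_rankOne_self_sub_smul_one_le hc.le (hcr.trans_eq hx.symm)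
  have hmean (i) : ∫ x, Y (x i) ∂Measure.pi μ = 0 :=
    (integral_comp_eval (μ := μ) hY.aestronglyMeasurable).trans
      (integral_rankOne_self_sub_smul_one (hnorm i) (hiso i))
  have hsq (i) : ∫ x, Y (x i) ^ 2 ∂Measure.pi μ = (c * (r - c)) • 1 :=
    (integral_comp_eval (μ := μ) (hY.pow 2).aestronglyMeasurable).trans
      (integral_rankOne_self_sub_smul_one_sq (hnorm i) (hiso i))
  have hvar (i) : ‖∫ x, Y (x i) ^ 2 ∂Measure.pi μ‖ ≤ c * (r - c) := by
    rw [hsq, norm_smul, norm_one, mul_one, Real.norm_of_nonneg hvpos.le]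
  simpa only [Finset.sum_const, Finset.card_univ, nsmul_eq_mul] using
    operator_bernstein hindep hmeas (fun i => .of_forall fun x => hsa (x i)) hbound hmean hvar
      (Finset.sum_pos (fun _ _ => hvpos) Finset.univ_nonempty) ht

lemma frameOperator_sub_one {d n : ℕ} (hn : n ≠ 0) (x : Fin n → EuclideanSpace ℝ (Fin d)) :
    frameOperator x - 1 = ∑ i, (rankOne ℝ (x i) (x i) - (n : ℝ)⁻¹ • 1) := by
  rw [Finset.sum_sub_distrib, Finset.sum_const, Finset.card_univ, Fintype.card_fin,
    ← Nat.cast_smul_eq_nsmul ℝ, smul_inv_smul₀ (Nat.cast_ne_zero.mpr hn)]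
  rfl

theorem frameOperator_concentration {d n : ℕ} (hd : 2 ≤ d) (hn : 0 < n)
    {μ : Fin n → Measure (EuclideanSpace ℝ (Fin d))} [∀ i, IsProbabilityMeasure (μ i)]
    (hnorm : ∀ i, ∀ᵐ y ∂μ i, ‖y‖ ^ 2 = d / n)
    (hiso : ∀ i, ∫ y, rankOne ℝ y y ∂μ i = (n : ℝ)⁻¹ • 1) {ε : ℝ} (hε : 0 ≤ ε) :
    (Measure.pi μ).real {x | ε ≤ ‖frameOperator x - 1‖} ≤
      2 * d * Real.exp (-(n * ε ^ 2 / (2 * (d - 1) * (1 + ε / 3)))) := by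
  have : NeZero d := ⟨by lia⟩
  have : NeZero n := ⟨hn.ne'⟩
  have hd₁ : 0 < (d : ℝ) - 1 := by
    have : (2 : ℝ) ≤ d := mod_cast hd
    linarith
  have hcr : 2 * (n : ℝ)⁻¹ ≤ d / n := by
    rw [div_eq_mul_inv]
    gcongr
    exact_mod_cast hd
  have hexponent : ε ^ 2 / 2 / (n * ((n : ℝ)⁻¹ * (d / n - (n : ℝ)⁻¹)) +
      (d / n - (n : ℝ)⁻¹) * ε / 3) = n * ε ^ 2 / (2 * (d - 1) * (1 + ε / 3)) := by
    field_simp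
  simpa only [frameOperator_sub_one hn.ne', Fintype.card_fin, hexponent] using
    rankOne_sum_concentration (inv_pos.mpr (Nat.cast_pos.mpr hn)) hcr hnorm hiso hε

theorem sphere_concentration_sample_complexity_general
    (d : ℕ) (hd : 2 ≤ d) (δ ε : ℝ) (hδ : 0 < δ) (hε : 0 < ε) (n : ℕ) (hn : 0 < n)
    (hnC : ((2 * d - 2 + 2 * ε * (d - 1) / 3) / ε ^ 2) * Real.log (2 * d / δ) ≤ n)
    (μ : Fin n → Measure (EuclideanSpace ℝ (Fin d))) [∀ i, IsProbabilityMeasure (μ i)]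
    (hnorm : ∀ i, ∀ᵐ y ∂μ i, ‖y‖ ^ 2 = d / n)
    (hiso : ∀ i, ∫ y, rankOne ℝ y y ∂μ i = (n : ℝ)⁻¹ • 1) :
    (Measure.pi μ) {x | ε ≤ ‖frameOperator x - 1‖} ≤ ENNReal.ofReal δ := by
  have hd' : (2 : ℝ) ≤ d := mod_cast hd
  set K : ℝ := 2 * (d - 1) * (1 + ε / 3) with hK
  have hK₀ : 0 < K := mul_pos (by linarith) (by positivity)
  have hlog : Real.log (2 * d / δ) ≤ n * ε ^ 2 / K := by
    have hC : (2 * d - 2 + 2 * ε * (d - 1) / 3) / ε ^ 2 = K / ε ^ 2 := by rw [hK]; ring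
    rw [hC, div_mul_eq_mul_div, div_le_iff₀ (by positivity)] at hnC
    rwa [le_div_iff₀' hK₀]
  rw [← ofReal_measureReal]
  refine ENNReal.ofReal_le_ofReal ?_
  calc (Measure.pi μ).real {x | ε ≤ ‖frameOperator x - 1‖}
      ≤ 2 * d * Real.exp (-(n * ε ^ 2 / K)) := frameOperator_concentration hd hn hnorm hiso hε.le
    _ ≤ 2 * d * Real.exp (-Real.log (2 * d / δ)) := by gcongr
    _ = δ := by
        rw [Real.exp_neg, Real.exp_log (by positivity), inv_div, mul_div_cancel₀ _ (by positivity)]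

/-- **Sample-complexity form of sphere concentration.**
Let `d ≥ 2`, `δ ∈ (0,1)`, `ε > 0`, and `C = (2d - 2 + 2ε(d-1)/3)/ε²`. If `n ≥ C·log(2d/δ)`
and `x₁, …, xₙ` are i.i.d. uniform on the sphere of radius `√(d/n)` in `ℝ^d` (their joint
law being the `n`-fold product of the uniform probability measure `μ` on that sphere,
characterized as a rotation-invariant probability measure supported on the sphere), then
`ℙ(‖S - I‖_op ≥ ε) ≤ δ`. -/
theorem sphere_concentration_sample_complexity
    (d : ℕ) (hd : 2 ≤ d) (δ ε : ℝ) (hδ : δ ∈ Set.Ioo (0 : ℝ) 1) (hε : 0 < ε)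
    (n : ℕ) (hn : 0 < n)
    (hnC : ((2 * d - 2 + 2 * ε * (d - 1) / 3) / ε ^ 2) * Real.log (2 * d / δ) ≤ n)
    (μ : Measure (EuclideanSpace ℝ (Fin d))) [IsProbabilityMeasure μ]
    (hsupp : μ (Metric.sphere (0 : EuclideanSpace ℝ (Fin d)) (Real.sqrt (d / n))) = 1)
    (hinv : ∀ Q : EuclideanSpace ℝ (Fin d) ≃ₗᵢ[ℝ] EuclideanSpace ℝ (Fin d),
      Measure.map (⇑Q) μ = μ) :
    (Measure.pi fun _ : Fin n => μ)
        {x | ε ≤ ‖frameOperator x - 1‖}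
      ≤ ENNReal.ofReal δ := by
  have hnorm := ae_norm_sq_eq_of_measure_sphere_sqrt_eq_one (by positivity) hsupp
  exact sphere_concentration_sample_complexity_general d hd δ ε hδ.1 hε n hn hnC (fun _ => μ)
    (fun _ => hnorm) fun _ =>
    integral_rankOne_self_of_rotation_invariant_of_norm_sq_eq_div (by lia) hnorm hinv
end
end

section
/- Let d ≥ 2 and n be integers with n ≥ e^d, let ε > 0 satisfy 3·sqrt((ln n)/n) < ε, and let U be a random n×d matrix drawn from the symmetric measure on the Stiefel manifold St(n,d), with rows u_1,…,u_n (so the rows form a random Parseval frame in ℝ^d). Then the probability that there exists i ∈ {1,…,n} with |‖u_i‖ − sqrt(d/n)| ≥ ε is at most exp( − (n−2)·(ε − 3 sqrt((ln n)/n))² / 8 ). -/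
open MeasureTheory ProbabilityTheory Real Matrix

noncomputable section

/-- Matrices over a measurable space carry the (Borel) product measurable structure. -/
instance matrixMeasurableSpace {m n α : Type*} [MeasurableSpace α] :
    MeasurableSpace (Matrix m n α) :=
  inferInstanceAs (MeasurableSpace (m → n → α))

/-- The Euclidean norm of the `i`-th row of an `n × d` real matrix. -/
def rowNorm {n d : ℕ} (U : Matrix (Fin n) (Fin d) ℝ) (i : Fin n) : ℝ :=
  Real.sqrt (∑ j : Fin d, (U i j) ^ 2)

/-!
Since the law of `U` is invariant under `O(n)`, the norm of a row has the law of `‖Uᵀ g‖ / ‖g‖` for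
a standard Gaussian vector `g` of `ℝⁿ` independent of `U`. Conditionally on `U`, this is the
relative length of the projection of `g` onto a `d`-dimensional subspace. Both of its tails are
estimated by exponential Markov applied to a diagonal quadratic form in `g`; for the threshold `r`
the optimal tilt gives the relative entropy of `d / n` and `r ^ 2`, at least `(r - √(d / n)) ^ 2`.
So a row deviates by `ε` with probability at most `2 * exp (-n * ε ^ 2 / 2)`, and a union bound over
all rows costs a factor `n` that the slack `3 * √(log n / n)` absorbs.
-/

section RelativeEntropy

lemma sub_le_mul_log_div {x y : ℝ} (hx : 0 ≤ x) (hy : 0 < y) : x - y ≤ x * Real.log (x / y) := by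
  rcases hx.eq_or_lt with rfl | hx
  · simpa using hy.le
  · calc x - y = x * (1 - (x / y)⁻¹) := by field_simp
      _ ≤ x * Real.log (x / y) := by
        gcongr
        exact Real.one_sub_inv_le_log_of_pos (by positivity)

lemma two_mul_sub_sqrt_mul_sqrt_le_mul_log_div {x y : ℝ} (hx : 0 ≤ x) (hy : 0 < y) :
    2 * (x - √x * √y) ≤ x * Real.log (x / y) := by
  calc 2 * (x - √x * √y) = 2 * √x * (√x - √y) := by linear_combination -2 * Real.mul_self_sqrt hx
    _ ≤ 2 * √x * (√x * Real.log (√x / √y)) := by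
      gcongr
      exact sub_le_mul_log_div (Real.sqrt_nonneg x) (Real.sqrt_pos.2 hy)
    _ = x * Real.log (x / y) := by
      rw [← Real.sqrt_div hx, Real.log_sqrt (by positivity)]
      linear_combination Real.log (x / y) * Real.mul_self_sqrt hx

lemma sq_sqrt_sub_sqrt_le_binaryRelEntropy {p s : ℝ} (hp0 : 0 ≤ p) (hp1 : p ≤ 1)
    (hs0 : 0 < s) (hs1 : s < 1) :
    (√s - √p) ^ 2 ≤ p * Real.log (p / s) + (1 - p) * Real.log ((1 - p) / (1 - s)) := by
  calc (√s - √p) ^ 2 = 2 * (p - √p * √s) + ((1 - p) - (1 - s)) := by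
        linear_combination Real.sq_sqrt hs0.le + Real.sq_sqrt hp0
    _ ≤ _ := add_le_add (two_mul_sub_sqrt_mul_sqrt_le_mul_log_div hp0 hs0)
        (sub_le_mul_log_div (by linarith) (by linarith))

-- Inside `(0, 1)` this is the optimal tilt, for which the right-hand side is the relative entropy
-- of `p` and `s`; it diverges at the endpoints, where any tilt with logarithm `1` does.
lemma exists_tilt_sq_sqrt_sub_sqrt_le {p s : ℝ} (hp : p ∈ Set.Icc 0 1) (hs : s ∈ Set.Icc 0 1) :
    ∃ a : ℝ, 0 ≤ a * (s - p) ∧ (0 < p → a * (1 - s) < 1 / 2) ∧ (p < 1 → -(a * s) < 1 / 2) ∧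
      (√s - √p) ^ 2 ≤
        p * Real.log (1 - 2 * (a * (1 - s))) + (1 - p) * Real.log (1 - 2 * (-(a * s))) := by
  obtain ⟨hp0, hp1⟩ := hp
  have hexp : 1 < Real.exp 1 := Real.one_lt_exp_iff.2 one_pos
  rcases hs.1.eq_or_lt with rfl | hs0
  · refine ⟨(1 - Real.exp 1) / 2, by nlinarith, fun _ ↦ by linarith [Real.exp_pos 1],
      fun _ ↦ by norm_num, le_of_eq ?_⟩
    ring_nf
    simp [Real.sq_sqrt hp0]
  rcases hs.2.eq_or_lt with rfl | hs1
  · refine ⟨(Real.exp 1 - 1) / 2, by nlinarith, fun _ ↦ by norm_num, fun _ ↦ by linarith, ?_⟩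
    have hsqrt : 0 ≤ √p * (1 - √p) :=
      mul_nonneg (Real.sqrt_nonneg p) (sub_nonneg.2 (Real.sqrt_le_one.2 hp1))
    ring_nf
    simp only [Real.log_one, Real.log_exp]
    nlinarith [Real.sq_sqrt hp0]
  · have hs1' : 0 < 1 - s := sub_pos.2 hs1
    have hleft : 1 - 2 * ((s - p) / (2 * s * (1 - s)) * (1 - s)) = p / s := by
      field_simp
      ring
    have hright : 1 - 2 * -((s - p) / (2 * s * (1 - s)) * s) = (1 - p) / (1 - s) := by
      field_simp
      ring
    refine ⟨(s - p) / (2 * s * (1 - s)), ?_, fun hp ↦ ?_, fun hp ↦ ?_, ?_⟩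
    · rw [div_mul_eq_mul_div]
      exact div_nonneg (mul_self_nonneg _) (by positivity)
    · linarith [div_pos hp hs0]
    · linarith [div_pos (sub_pos.2 hp) hs1']
    · rw [hleft, hright]
      exact sq_sqrt_sub_sqrt_le_binaryRelEntropy hp0 hp1 hs0 hs1

end RelativeEntropy

section GaussianQuadraticForm

lemma gaussianPDFReal_mul_exp_mul_sq (t x : ℝ) :
    gaussianPDFReal 0 1 x * Real.exp (t * x ^ 2)
      = (√(2 * π))⁻¹ * Real.exp (-(1 / 2 - t) * x ^ 2) := by
  simp only [gaussianPDFReal, NNReal.coe_one, mul_one, sub_zero]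
  rw [mul_assoc, ← Real.exp_add]
  ring_nf

lemma integrable_exp_mul_sq_gaussianReal {t : ℝ} (ht : t < 1 / 2) :
    Integrable (fun x ↦ Real.exp (t * x ^ 2)) (gaussianReal 0 1) := by
  rw [gaussianReal_of_var_ne_zero 0 one_ne_zero,
    integrable_withDensity_iff_integrable_smul' (by fun_prop) (by simp [gaussianPDF])]
  simp only [gaussianPDF, ENNReal.toReal_ofReal (gaussianPDFReal_nonneg 0 1 _), smul_eq_mul,
    gaussianPDFReal_mul_exp_mul_sq]
  exact (integrable_exp_neg_mul_sq (by linarith)).const_mul _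

lemma integral_exp_mul_sq_gaussianReal (t : ℝ) :
    ∫ x, Real.exp (t * x ^ 2) ∂(gaussianReal 0 1) = (√(1 - 2 * t))⁻¹ := by
  simp only [integral_gaussianReal_eq_integral_smul one_ne_zero, smul_eq_mul,
    gaussianPDFReal_mul_exp_mul_sq, integral_const_mul, integral_gaussian]
  rw [← Real.sqrt_inv, ← Real.sqrt_inv, ← Real.sqrt_mul (by positivity)]
  congr 1
  rw [show 1 - 2 * t = 2 * (1 / 2 - t) by ring]
  have := Real.pi_ne_zero
  field_simp

variable {ι E : Type*} [Fintype ι] [NormedAddCommGroup E] [InnerProductSpace ℝ E]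
  [FiniteDimensional ℝ E] [MeasurableSpace E] [BorelSpace E]

lemma lintegral_exp_sum_mul_sq_inner_stdGaussian (b : OrthonormalBasis ι ℝ E) {t : ι → ℝ}
    (ht : ∀ i, t i < 1 / 2) :
    ∫⁻ g, ENNReal.ofReal (Real.exp (∑ i, t i * inner ℝ (b i) g ^ 2)) ∂(stdGaussian E)
      = ENNReal.ofReal (∏ i, (√(1 - 2 * t i))⁻¹) := by
  rw [stdGaussian_eq_map_pi_orthonormalBasis b, lintegral_map (by fun_prop) (by fun_prop)]
  simp only [b.orthonormal.inner_right_fintype, Real.exp_sum]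
  rw [← ofReal_integral_eq_lintegral_ofReal
      (Integrable.fintype_prod fun i ↦ integrable_exp_mul_sq_gaussianReal (ht i))
      (ae_of_all _ fun x ↦ by positivity),
    integral_fintype_prod_eq_prod fun i (x : ℝ) ↦ Real.exp (t i * x ^ 2)]
  simp only [integral_exp_mul_sq_gaussianReal]

lemma stdGaussian_sum_mul_sq_inner_nonneg_le (b : OrthonormalBasis ι ℝ E) {t : ι → ℝ}
    (ht : ∀ i, t i < 1 / 2) :
    stdGaussian E {g | 0 ≤ ∑ i, t i * inner ℝ (b i) g ^ 2}
      ≤ ENNReal.ofReal (Real.exp (-(∑ i, Real.log (1 - 2 * t i)) / 2)) := by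
  have inv_sqrt_eq (i : ι) : (√(1 - 2 * t i))⁻¹ = Real.exp (-(Real.log (1 - 2 * t i) / 2)) := by
    have hpos : 0 < 1 - 2 * t i := by linarith [ht i]
    rw [Real.exp_neg, ← Real.log_sqrt hpos.le, Real.exp_log (Real.sqrt_pos.2 hpos)]
  have markov := meas_ge_le_lintegral_div (μ := stdGaussian E) (ε := 1)
    (f := fun g ↦ ENNReal.ofReal (Real.exp (∑ i, t i * inner ℝ (b i) g ^ 2)))
    (by fun_prop) one_ne_zero ENNReal.one_ne_top
  simpa only [ENNReal.one_le_ofReal, Real.one_le_exp_iff, div_one,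
    lintegral_exp_sum_mul_sq_inner_stdGaussian b ht, inv_sqrt_eq, ← Real.exp_sum,
    Finset.sum_neg_distrib, ← Finset.sum_div, ← neg_div] using markov

end GaussianQuadraticForm

section Projection

variable {κ E : Type*} [Fintype κ] [NormedAddCommGroup E] [InnerProductSpace ℝ E]
  [FiniteDimensional ℝ E]

lemma exists_orthonormalBasis_extension_inl {v : κ → E} (hv : Orthonormal ℝ v) :
    ∃ b : OrthonormalBasis (κ ⊕ Fin (Module.finrank ℝ E - Fintype.card κ)) ℝ E,
      ∀ j, b (Sum.inl j) = v j := by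
  have hcard : Fintype.card κ ≤ Module.finrank ℝ E := hv.linearIndependent.fintype_card_le_finrank
  let w : κ ⊕ Fin (Module.finrank ℝ E - Fintype.card κ) → E := Sum.elim v 0
  have hw : Orthonormal ℝ ((Set.range Sum.inl).domRestrict w) := by
    convert hv.comp _ (Equiv.ofInjective _ Sum.inl_injective).symm.injective
    ext ⟨_, j, rfl⟩
    simp [w]
  obtain ⟨b, hb⟩ := hw.exists_orthonormalBasis_extension_of_card_eq (by simp [hcard])
  exact ⟨b, fun j ↦ hb _ ⟨j, rfl⟩⟩

variable [MeasurableSpace E] [BorelSpace E]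

lemma stdGaussian_two_weights_nonneg_le {v : κ → E} (hv : Orthonormal ℝ v) {α β : ℝ}
    (hα : 0 < Fintype.card κ → α < 1 / 2)
    (hβ : Fintype.card κ < Module.finrank ℝ E → β < 1 / 2) :
    stdGaussian E
        {g | 0 ≤ α * ∑ j, inner ℝ (v j) g ^ 2 + β * (‖g‖ ^ 2 - ∑ j, inner ℝ (v j) g ^ 2)}
      ≤ ENNReal.ofReal (Real.exp (-(Fintype.card κ * Real.log (1 - 2 * α)
          + (Module.finrank ℝ E - Fintype.card κ) * Real.log (1 - 2 * β)) / 2)) := by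
  have hcard : Fintype.card κ ≤ Module.finrank ℝ E := hv.linearIndependent.fintype_card_le_finrank
  obtain ⟨b, hb⟩ := exists_orthonormalBasis_extension_inl hv
  have parseval (g : E) : ‖g‖ ^ 2 - ∑ j, inner ℝ (v j) g ^ 2 = ∑ i, inner ℝ (b (.inr i)) g ^ 2 := by
    rw [← b.sum_sq_inner_right, Fintype.sum_sum_type]
    simp only [hb, add_sub_cancel_left]
  have chernoff := stdGaussian_sum_mul_sq_inner_nonneg_le b (t := Sum.elim (fun _ ↦ α) (fun _ ↦ β))
    (Sum.rec (fun j ↦ hα (Fintype.card_pos_iff.2 ⟨j⟩)) (fun i ↦ hβ (by have := i.pos; omega)))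
  simpa only [Fintype.sum_sum_type, Sum.elim_inl, Sum.elim_inr, hb, ← Finset.mul_sum, parseval,
    Finset.sum_const, Finset.card_univ, Fintype.card_fin, nsmul_eq_mul, Nat.cast_sub hcard]
    using chernoff

-- The sign of `s - card κ / finrank ℝ E` selects the tail, so both tails are covered at once.
lemma stdGaussian_sum_sq_inner_tail_le {v : κ → E} (hv : Orthonormal ℝ v) {s : ℝ}
    (hs : s ∈ Set.Icc 0 1) :
    stdGaussian E {g | 0 ≤ (s - Fintype.card κ / Module.finrank ℝ E)
        * (∑ j, inner ℝ (v j) g ^ 2 - s * ‖g‖ ^ 2)}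
      ≤ ENNReal.ofReal (Real.exp (-(Module.finrank ℝ E
          * (√s - √(Fintype.card κ / Module.finrank ℝ E)) ^ 2) / 2)) := by
  have hcard : Fintype.card κ ≤ Module.finrank ℝ E := hv.linearIndependent.fintype_card_le_finrank
  set k : ℝ := (Fintype.card κ : ℝ)
  set N : ℝ := (Module.finrank ℝ E : ℝ)
  have hkN : k ≤ N := Nat.cast_le.2 hcard
  have hN0 : 0 ≤ N := Nat.cast_nonneg _
  have hNk : N * (k / N) = k := mul_div_cancel_of_imp' fun h ↦
    le_antisymm (h ▸ hkN) (Nat.cast_nonneg _)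
  by_cases hsp : s = k / N
  · simp [← hsp]
  obtain ⟨a, ha, hα, hβ, hlog⟩ := exists_tilt_sq_sqrt_sub_sqrt_le
    ⟨by positivity, div_le_one_of_le₀ hkN hN0⟩ hs
  have hα' (h : 0 < Fintype.card κ) : a * (1 - s) < 1 / 2 := by
    have hk0 : 0 < k := Nat.cast_pos.2 h
    exact hα (div_pos hk0 (hk0.trans_le hkN))
  have hβ' (h : Fintype.card κ < Module.finrank ℝ E) : -(a * s) < 1 / 2 :=
    hβ ((div_lt_one (Nat.cast_pos.2 (by omega))).2 (Nat.cast_lt.2 h))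
  have hexponent : N * (√s - √(k / N)) ^ 2 ≤
      k * Real.log (1 - 2 * (a * (1 - s))) + (N - k) * Real.log (1 - 2 * (-(a * s))) :=
    calc N * (√s - √(k / N)) ^ 2 ≤ N * _ := mul_le_mul_of_nonneg_left hlog hN0
      _ = _ := by linear_combination (Real.log (1 - 2 * (a * (1 - s)))
          - Real.log (1 - 2 * (-(a * s)))) * hNk
  calc _ ≤ _ := measure_mono fun g hg ↦ ?_
    _ ≤ _ := stdGaussian_two_weights_nonneg_le hv hα' hβ'
    _ ≤ _ := by gcongr
  have hpos : 0 < (s - k / N) ^ 2 := sq_pos_of_ne_zero (sub_ne_zero.2 hsp)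
  refine nonneg_of_mul_nonneg_right ?_ hpos
  linear_combination mul_nonneg ha hg

end Projection

section OrthogonalInvariance

variable {ι κ : Type*}

lemma measurable_matrix_entry (i : ι) (j : κ) : Measurable (fun U : Matrix ι κ ℝ ↦ U i j) :=
  (measurable_pi_apply j).comp (measurable_pi_apply i)

lemma orthonormal_rows_iff [Fintype κ] [DecidableEq ι] (A : Matrix ι κ ℝ) :
    Orthonormal ℝ (fun i ↦ WithLp.toLp 2 (A.row i)) ↔ A * Aᵀ = 1 := by
  rw [orthonormal_iff_ite, ← Matrix.ext_iff]
  simp [PiLp.inner_apply, Matrix.mul_apply, Matrix.one_apply, mul_comm]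

lemma orthonormal_cols_iff [Fintype ι] [DecidableEq κ] (A : Matrix ι κ ℝ) :
    Orthonormal ℝ (fun j ↦ WithLp.toLp 2 (A.col j)) ↔ Aᵀ * A = 1 :=
  orthonormal_rows_iff Aᵀ

lemma card_cols_le_card_rows [Fintype ι] [Fintype κ] [DecidableEq κ] {U : Matrix ι κ ℝ}
    (hU : Uᵀ * U = 1) : Fintype.card κ ≤ Fintype.card ι := by
  simpa using ((orthonormal_cols_iff U).2 hU).linearIndependent.fintype_card_le_finrank

lemma sum_sq_row_le_one [Fintype ι] [Fintype κ] [DecidableEq κ] {U : Matrix ι κ ℝ}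
    (hU : Uᵀ * U = 1) (i : ι) : ∑ j, U i j ^ 2 ≤ 1 := by
  classical
  simpa [EuclideanSpace.inner_single_right] using
    ((orthonormal_cols_iff U).2 hU).sum_inner_products_le (s := Finset.univ)
      (x := EuclideanSpace.single i (1 : ℝ))

variable [Fintype ι] [DecidableEq ι]

lemma exists_orthogonal_matrix_row_eq (i : ι) {θ : EuclideanSpace ℝ ι} (hθ : ‖θ‖ = 1) :
    ∃ Q : Matrix ι ι ℝ, Qᵀ * Q = 1 ∧ Q.row i = θ.ofLp := by
  have hv : Orthonormal ℝ (({i} : Set ι).domRestrict fun _ ↦ θ) :=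
    ⟨fun _ ↦ hθ, fun j k hjk ↦ absurd (Subsingleton.elim j k) hjk⟩
  obtain ⟨b, hb⟩ := hv.exists_orthonormalBasis_extension_of_card_eq (by simp)
  exact ⟨Matrix.of fun k ↦ (b k).ofLp,
    mul_eq_one_comm.1 ((orthonormal_rows_iff _).1 b.orthonormal),
    congrArg WithLp.ofLp (hb i rfl)⟩

variable {μ : Measure (Matrix ι κ ℝ)}

lemma measure_row_mem_eq_measure_vecMul_mem
    (hinv : ∀ Q : Matrix ι ι ℝ, Qᵀ * Q = 1 → μ.map (fun U ↦ Q * U) = μ) (i : ι)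
    {θ : EuclideanSpace ℝ ι} (hθ : ‖θ‖ = 1) {T : Set (κ → ℝ)} (hT : MeasurableSet T) :
    μ {U | U.row i ∈ T} = μ {U | θ.ofLp ᵥ* U ∈ T} := by
  obtain ⟨Q, hQ, hQi⟩ := exists_orthogonal_matrix_row_eq i hθ
  have hrow : MeasurableSet {U : Matrix ι κ ℝ | U.row i ∈ T} := measurable_pi_apply i hT
  have hQm : Measurable (fun U : Matrix ι κ ℝ ↦ Q * U) :=
    measurable_pi_lambda _ fun a ↦ measurable_pi_lambda _ fun c ↦
      Finset.measurable_sum _ fun k _ ↦ (measurable_matrix_entry k c).const_mul (Q a k)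
  calc μ {U | U.row i ∈ T} = μ.map (fun U ↦ Q * U) {U | U.row i ∈ T} := by rw [hinv Q hQ]
    _ = μ {U | Q.row i ᵥ* U ∈ T} := Measure.map_apply hQm hrow
    _ = μ {U | θ.ofLp ᵥ* U ∈ T} := by rw [hQi]

variable [Fintype κ]

lemma measure_row_sq_le_measure_vecMul_sq
    (hinv : ∀ Q : Matrix ι ι ℝ, Qᵀ * Q = 1 → μ.map (fun U ↦ Q * U) = μ) (i : ι) (c s : ℝ)
    (g : EuclideanSpace ℝ ι) :
    μ {U | 0 ≤ c * (∑ j, U i j ^ 2 - s)}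
      ≤ μ {U | 0 ≤ c * (∑ j, (g.ofLp ᵥ* U) j ^ 2 - s * ‖g‖ ^ 2)} := by
  rcases eq_or_ne g 0 with rfl | hg
  · exact measure_mono fun U _ ↦ by simp
  have hT : MeasurableSet {w : κ → ℝ | 0 ≤ c * (∑ j, w j ^ 2 - s)} :=
    measurableSet_le (by fun_prop) (by fun_prop)
  have hθ : ‖‖g‖⁻¹ • g‖ = 1 := norm_smul_inv_norm hg
  calc μ {U | 0 ≤ c * (∑ j, U i j ^ 2 - s)}
      = μ {U | 0 ≤ c * (∑ j, ((‖g‖⁻¹ • g).ofLp ᵥ* U) j ^ 2 - s)} :=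
        measure_row_mem_eq_measure_vecMul_mem hinv i hθ hT
    _ ≤ _ := measure_mono fun U hU ↦ ?_
  have hscale : c * (∑ j, (g.ofLp ᵥ* U) j ^ 2 - s * ‖g‖ ^ 2)
      = ‖g‖ ^ 2 * (c * (∑ j, ((‖g‖⁻¹ • g).ofLp ᵥ* U) j ^ 2 - s)) := by
    have := norm_ne_zero_iff.2 hg
    simp only [WithLp.ofLp_smul, Matrix.smul_vecMul, Pi.smul_apply, smul_eq_mul, mul_pow,
      ← Finset.mul_sum]
    field_simp
  exact (mul_nonneg (sq_nonneg _) hU).trans_eq hscale.symm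

variable [DecidableEq κ] [IsProbabilityMeasure μ]

-- By invariance the row may be replaced by the normalized image of a Gaussian vector, and
-- exchanging the order of integration reduces to a Gaussian estimate for each fixed `U`.
lemma measure_sum_sq_row_tail_le (hae : ∀ᵐ U ∂μ, Uᵀ * U = 1)
    (hinv : ∀ Q : Matrix ι ι ℝ, Qᵀ * Q = 1 → μ.map (fun U ↦ Q * U) = μ) (i : ι) {s : ℝ}
    (hs : s ∈ Set.Icc 0 1) :
    μ {U | 0 ≤ (s - Fintype.card κ / Fintype.card ι) * (∑ j, U i j ^ 2 - s)}
      ≤ ENNReal.ofReal (Real.exp (-(Fintype.card ι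
          * (√s - √(Fintype.card κ / Fintype.card ι)) ^ 2) / 2)) := by
  set c : ℝ := s - Fintype.card κ / Fintype.card ι
  set B : ℝ := Real.exp (-(Fintype.card ι * (√s - √(Fintype.card κ / Fintype.card ι)) ^ 2) / 2)
  set γ := stdGaussian (EuclideanSpace ℝ ι)
  let S : Set (EuclideanSpace ℝ ι × Matrix ι κ ℝ) :=
    {p | 0 ≤ c * (∑ j, (p.1.ofLp ᵥ* p.2) j ^ 2 - s * ‖p.1‖ ^ 2)}
  have hS : MeasurableSet S := by
    have hvecMul (j : κ) :
        Measurable fun p : EuclideanSpace ℝ ι × Matrix ι κ ℝ ↦ (p.1.ofLp ᵥ* p.2) j :=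
      Finset.measurable_sum _ fun k _ ↦
        Measurable.mul (by fun_prop) ((measurable_matrix_entry k j).comp measurable_snd)
    exact measurableSet_le measurable_const
      (((Finset.measurable_sum _ fun j _ ↦ (hvecMul j).pow_const 2).sub (by fun_prop)).const_mul c)
  have gaussian_bound (U : Matrix ι κ ℝ) (hU : Uᵀ * U = 1) :
      γ ((fun g ↦ (g, U)) ⁻¹' S) ≤ ENNReal.ofReal B := by
    have hproj (g : EuclideanSpace ℝ ι) (j : κ) :
        inner ℝ (WithLp.toLp 2 (U.col j)) g = (g.ofLp ᵥ* U) j := by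
      simp [PiLp.inner_apply, Matrix.vecMul, dotProduct]
    have tail := stdGaussian_sum_sq_inner_tail_le ((orthonormal_cols_iff U).2 hU) hs
    simp only [hproj, finrank_euclideanSpace] at tail
    exact tail
  calc μ {U | 0 ≤ c * (∑ j, U i j ^ 2 - s)}
      = ∫⁻ _, μ {U | 0 ≤ c * (∑ j, U i j ^ 2 - s)} ∂γ := by simp
    _ ≤ ∫⁻ g, μ (Prod.mk g ⁻¹' S) ∂γ :=
        lintegral_mono fun g ↦ measure_row_sq_le_measure_vecMul_sq hinv i c s g
    _ = ∫⁻ U, γ ((fun g ↦ (g, U)) ⁻¹' S) ∂μ := by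
        rw [← Measure.prod_apply hS, Measure.prod_apply_symm hS]
    _ ≤ ∫⁻ _, ENNReal.ofReal B ∂μ := lintegral_mono_ae (hae.mono gaussian_bound)
    _ = ENNReal.ofReal B := by simp

end OrthogonalInvariance

section Stiefel

variable {n d : ℕ} {μ : Measure (Matrix (Fin n) (Fin d) ℝ)} [IsProbabilityMeasure μ]

lemma ae_transpose_mul_self_eq_one
    (hsupp : μ {U : Matrix (Fin n) (Fin d) ℝ | Uᵀ * U = 1} = 1) : ∀ᵐ U ∂μ, Uᵀ * U = 1 := by
  have hmeas : MeasurableSet {U : Matrix (Fin n) (Fin d) ℝ | Uᵀ * U = 1} := by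
    simp only [← Matrix.ext_iff, Matrix.mul_apply, Matrix.transpose_apply, Set.ofPred_forall]
    exact .iInter fun a ↦ .iInter fun c ↦ measurableSet_eq_fun
      (Finset.measurable_sum _ fun k _ ↦
        (measurable_matrix_entry k a).mul (measurable_matrix_entry k c)) measurable_const
  exact (mem_ae_iff_prob_eq_one hmeas).2 hsupp

lemma measure_rowNorm_tail_le (hae : ∀ᵐ U ∂μ, Uᵀ * U = 1)
    (hinv : ∀ Q : Matrix (Fin n) (Fin n) ℝ, Qᵀ * Q = 1 → μ.map (fun U ↦ Q * U) = μ)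
    (i : Fin n) (r : ℝ) :
    μ {U | 0 ≤ (r - √(d / n)) * (rowNorm U i - r)}
      ≤ ENNReal.ofReal (Real.exp (-(n * (r - √(d / n)) ^ 2) / 2)) := by
  have hq : 0 ≤ √((d : ℝ) / n) := Real.sqrt_nonneg _
  by_cases hr : r ∈ Set.Icc 0 1
  · have hsq := measure_sum_sq_row_tail_le hae hinv i (s := r ^ 2)
      ⟨sq_nonneg r, pow_le_one₀ hr.1 hr.2⟩
    simp only [Fintype.card_fin, Real.sqrt_sq hr.1] at hsq
    refine (measure_mono fun U hU ↦ ?_).trans hsq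
    have hρ : 0 ≤ rowNorm U i := Real.sqrt_nonneg _
    have hfactor : (r ^ 2 - d / n) * (∑ j, U i j ^ 2 - r ^ 2)
        = (r - √(d / n)) * (rowNorm U i - r) * ((r + √(d / n)) * (rowNorm U i + r)) := by
      rw [← Real.sq_sqrt (show 0 ≤ (d : ℝ) / n by positivity),
        ← Real.sq_sqrt (show 0 ≤ ∑ j, U i j ^ 2 by positivity), ← rowNorm, Real.sqrt_sq hq]
      ring
    have hsum : 0 ≤ (r + √(d / n)) * (rowNorm U i + r) :=
      mul_nonneg (add_nonneg hr.1 hq) (add_nonneg hρ hr.1)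
    exact (mul_nonneg hU hsum).trans_eq hfactor.symm
  · suffices h : ∀ᵐ U ∂μ, ¬ 0 ≤ (r - √(d / n)) * (rowNorm U i - r) by
      have hzero := ae_iff.1 h
      simp only [not_not] at hzero
      exact hzero.trans_le (zero_le)
    filter_upwards [hae] with U hU
    have hρ0 : 0 ≤ rowNorm U i := Real.sqrt_nonneg _
    have hρ1 : rowNorm U i ≤ 1 := Real.sqrt_le_one.2 (sum_sq_row_le_one hU i)
    have hq1 : √((d : ℝ) / n) ≤ 1 := Real.sqrt_le_one.2 <|
      div_le_one_of_le₀ (by simpa using card_cols_le_card_rows hU) n.cast_nonneg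
    rw [Set.mem_Icc, not_and_or, not_le, not_le] at hr
    rcases hr with hr | hr <;> nlinarith

lemma measure_le_abs_rowNorm_sub_le (hae : ∀ᵐ U ∂μ, Uᵀ * U = 1)
    (hinv : ∀ Q : Matrix (Fin n) (Fin n) ℝ, Qᵀ * Q = 1 → μ.map (fun U ↦ Q * U) = μ)
    {ε : ℝ} (hε : 0 ≤ ε) (i : Fin n) :
    μ {U | ε ≤ |rowNorm U i - √(d / n)|}
      ≤ ENNReal.ofReal (2 * Real.exp (-(n * ε ^ 2) / 2)) := by
  have hupper := measure_rowNorm_tail_le hae hinv i (√(d / n) + ε)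
  have hlower := measure_rowNorm_tail_le hae hinv i (√(d / n) - ε)
  simp only [add_sub_cancel_left, sub_sub_cancel_left, neg_sq] at hupper hlower
  rw [two_mul, ENNReal.ofReal_add (by positivity) (by positivity)]
  refine (measure_mono fun U hU ↦ ?_).trans
    ((measure_union_le _ _).trans (add_le_add hupper hlower))
  rcases le_abs.1 (Set.mem_ofPred.1 hU) with h | h
  · exact .inl (mul_nonneg hε (by linarith))
  · exact .inr (mul_nonneg_of_nonpos_of_nonpos (neg_nonpos.2 hε) (by linarith))

lemma measure_exists_le_abs_rowNorm_sub_le (hae : ∀ᵐ U ∂μ, Uᵀ * U = 1)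
    (hinv : ∀ Q : Matrix (Fin n) (Fin n) ℝ, Qᵀ * Q = 1 → μ.map (fun U ↦ Q * U) = μ)
    {ε : ℝ} (hε : 0 ≤ ε) :
    μ {U | ∃ i, ε ≤ |rowNorm U i - √(d / n)|}
      ≤ ENNReal.ofReal (n * (2 * Real.exp (-(n * ε ^ 2) / 2))) := by
  calc μ {U | ∃ i, ε ≤ |rowNorm U i - √(d / n)|}
      ≤ ∑ i, μ {U | ε ≤ |rowNorm U i - √(d / n)|} := by
        rw [Set.ofPred_exists]
        exact measure_iUnion_fintype_le _ _
    _ ≤ ∑ _i : Fin n, ENNReal.ofReal (2 * Real.exp (-(n * ε ^ 2) / 2)) :=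
        Finset.sum_le_sum fun i _ ↦ measure_le_abs_rowNorm_sub_le hae hinv hε i
    _ = ENNReal.ofReal (n * (2 * Real.exp (-(n * ε ^ 2) / 2))) := by
        rw [Finset.sum_const, Finset.card_univ, Fintype.card_fin, nsmul_eq_mul,
          ENNReal.ofReal_mul n.cast_nonneg, ENNReal.ofReal_natCast]

end Stiefel

lemma mul_two_mul_exp_le_exp {x ε : ℝ} (hx : 2 ≤ x) (hε : 3 * √(Real.log x / x) ≤ ε) :
    x * (2 * Real.exp (-(x * ε ^ 2) / 2))
      ≤ Real.exp (-((x - 2) * (ε - 3 * √(Real.log x / x)) ^ 2) / 8) := by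
  have hlog : Real.log 2 ≤ Real.log x := Real.log_le_log two_pos hx
  have hlog0 : 0 ≤ Real.log x := Real.log_nonneg (by linarith)
  set l := √(Real.log x / x)
  have hl : x * l ^ 2 = Real.log x := by
    rw [Real.sq_sqrt (by positivity)]
    field_simp
  have hsq : (ε - 3 * l) ^ 2 + 9 * l ^ 2 ≤ ε ^ 2 := by
    nlinarith [mul_nonneg (Real.sqrt_nonneg (Real.log x / x)) (sub_nonneg.2 hε)]
  have hxε : x * (ε - 3 * l) ^ 2 + 9 * Real.log x ≤ x * ε ^ 2 := by
    calc x * (ε - 3 * l) ^ 2 + 9 * Real.log x = x * ((ε - 3 * l) ^ 2 + 9 * l ^ 2) := by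
          rw [← hl]
          ring
      _ ≤ x * ε ^ 2 := by gcongr
  calc x * (2 * Real.exp (-(x * ε ^ 2) / 2))
      = Real.exp (Real.log x + (Real.log 2 + -(x * ε ^ 2) / 2)) := by
        rw [Real.exp_add, Real.exp_add, Real.exp_log (by linarith), Real.exp_log two_pos]
    _ ≤ Real.exp (-((x - 2) * (ε - 3 * l) ^ 2) / 8) := by
        gcongr
        nlinarith [sq_nonneg (ε - 3 * l)]

theorem stiefel_concentration_equal_norm_general
    (d n : ℕ) (μ : Measure (Matrix (Fin n) (Fin d) ℝ)) [IsProbabilityMeasure μ]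
    (hsupp : μ {U : Matrix (Fin n) (Fin d) ℝ | Uᵀ * U = 1} = 1)
    (hinv : ∀ Q : Matrix (Fin n) (Fin n) ℝ, Qᵀ * Q = 1 →
      Measure.map (fun U => Q * U) μ = μ)
    (ε : ℝ) (hε : 3 * Real.sqrt (Real.log n / n) ≤ ε) :
    μ {U : Matrix (Fin n) (Fin d) ℝ |
        ∃ i : Fin n, ε ≤ |rowNorm U i - Real.sqrt (d / n)|}
      ≤ ENNReal.ofReal
          (Real.exp (-((n - 2) * (ε - 3 * Real.sqrt (Real.log n / n)) ^ 2) / 8)) := by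
  have hε0 : 0 ≤ ε := le_trans (by positivity) hε
  rcases lt_or_ge n 2 with hn | hn
  · have hn' : (n : ℝ) ≤ 2 := by exact_mod_cast hn.le
    refine prob_le_one.trans (ENNReal.one_le_ofReal.2 (Real.one_le_exp ?_))
    nlinarith [sq_nonneg (ε - 3 * √(Real.log n / n))]
  · exact (measure_exists_le_abs_rowNorm_sub_le (ae_transpose_mul_self_eq_one hsupp) hinv hε0).trans
      (ENNReal.ofReal_le_ofReal (mul_two_mul_exp_le_exp (by exact_mod_cast hn) hε))

/-- **Concentration over the Stiefel manifold.**
Let `μ` be the symmetric measure on the Stiefel manifold `St(n,d) = {U : Uᵀ U = I_d}`,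
characterized as a probability measure on `n × d` matrices supported on `St(n,d)` and
invariant under left multiplication by every orthogonal `n × n` matrix. If `n ≥ e^d` and
`3·√((ln n)/n) < ε`, then the probability that some row `u_i` of a random `U ∼ μ`
satisfies `|‖u_i‖ - √(d/n)| ≥ ε` is at most
`exp(-(n-2)(ε - 3√((ln n)/n))²/8)`. -/
theorem stiefel_concentration_equal_norm
    (d n : ℕ) (hd : 2 ≤ d) (hn : Real.exp d ≤ n)
    (μ : Measure (Matrix (Fin n) (Fin d) ℝ)) [IsProbabilityMeasure μ]
    (hsupp : μ {U : Matrix (Fin n) (Fin d) ℝ | Uᵀ * U = 1} = 1)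
    (hinv : ∀ Q : Matrix (Fin n) (Fin n) ℝ, Qᵀ * Q = 1 →
      Measure.map (fun U => Q * U) μ = μ)
    (ε : ℝ) (hε : 3 * Real.sqrt (Real.log n / n) < ε) :
    μ {U : Matrix (Fin n) (Fin d) ℝ |
        ∃ i : Fin n, ε ≤ |rowNorm U i - Real.sqrt (d / n)|}
      ≤ ENNReal.ofReal
          (Real.exp (-((n - 2) * (ε - 3 * Real.sqrt (Real.log n / n)) ^ 2) / 8)) := by
  exact stiefel_concentration_equal_norm_general d n μ hsupp hinv ε hε.le
end
end

section
/- Let d ≥ 2 and n be integers with n ≥ e^d, and let U be a random n×d matrix drawn from the symmetric measure on the Stiefel manifold St(n,d), with rows u_1,…,u_n. Then E[ max_{1 ≤ i ≤ n} ‖u_i‖ ] ≤ 3 · sqrt((ln n)/n). -/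
open MeasureTheory ProbabilityTheory Real Matrix

noncomputable section

/-!
For fixed `v`, the vector `U v` has norm `‖v‖` and a rotation-invariant law, so its coordinate
`⟪u_i, v⟫` has the same law as its component along any of the unit vectors `(± 1, …, ± 1) / √n`.
Averaging over the signs and using `cosh t ≤ exp (t ^ 2 / 2)` shows that the row `u_i` is
sub-Gaussian with variance proxy `1 / n`. Integrating `E exp ⟪u_i, v⟫` against a Gaussian in `v`
then gives `E exp (n ‖u_i‖ ^ 2 / 4) ≤ 2 ^ (d / 2)`, and Jensen's inequality for `exp` yields
`E max ‖u_i‖ ^ 2 ≤ (4 / n) log (n 2 ^ (d / 2))`. When `d ≤ log n`, this is at most `9 log n / n`.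
-/

open WithLp Module
open scoped RealInnerProductSpace NNReal

section SubgaussianVector

variable {Ω V : Type*} [MeasurableSpace Ω] [NormedAddCommGroup V] [InnerProductSpace ℝ V]

/-- A random vector `X` is sub-Gaussian with variance proxy `c` if each of its marginals `⟪v, X⟫`
is sub-Gaussian with variance proxy `c * ‖v‖ ^ 2`. This condition on one-dimensional marginals
controls the exponential moments of `‖X‖ ^ 2`. -/
def IsSubgaussianVector (X : Ω → V) (c : ℝ≥0) (μ : Measure Ω) : Prop :=
  ∀ v : V, HasSubgaussianMGF (fun ω ↦ ⟪v, X ω⟫) (c * ‖v‖₊ ^ 2) μ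

namespace IsSubgaussianVector

variable {μ : Measure Ω} {X : Ω → V} {c : ℝ≥0}

lemma lintegral_exp_inner_le (hX : IsSubgaussianVector X c μ) (v : V) :
    ∫⁻ ω, .ofReal (exp ⟪v, X ω⟫) ∂μ ≤ .ofReal (exp (c * ‖v‖ ^ 2 / 2)) := by
  have hint := (hX v).integrable_exp_mul 1
  have hle := (hX v).mgf_le 1
  simp only [mgf, one_mul, one_pow, mul_one, NNReal.coe_mul, NNReal.coe_pow, coe_nnnorm]
    at hint hle
  rw [← ofReal_integral_eq_lintegral_ofReal hint (ae_of_all _ fun ω ↦ (exp_pos _).le)]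
  exact ENNReal.ofReal_le_ofReal hle

end IsSubgaussianVector

end SubgaussianVector

section RotationInvariant

lemma sum_exp_sum_signs_mul_le {ι : Type*} [Fintype ι] [DecidableEq ι] (a : ι → ℝ) :
    ∑ s : ι → ℤˣ, exp (∑ i, (s i : ℝ) * a i) ≤ 2 ^ Fintype.card ι * exp ((∑ i, a i ^ 2) / 2) := by
  calc ∑ s : ι → ℤˣ, exp (∑ i, (s i : ℝ) * a i)
      = ∏ i, ∑ s : ℤˣ, exp ((s : ℝ) * a i) := by
        simp_rw [exp_sum, Fintype.prod_sum]
    _ = ∏ i, 2 * cosh (a i) := by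
        refine Finset.prod_congr rfl fun i _ ↦ ?_
        rw [cosh_eq, UnitsInt.univ, Finset.sum_pair (by decide)]
        simp only [Units.val_one, Units.val_neg, Int.cast_one, Int.cast_neg, one_mul, neg_mul]
        ring
    _ ≤ ∏ i, 2 * exp (a i ^ 2 / 2) :=
        Finset.prod_le_prod (fun i _ ↦ by positivity) fun i _ ↦ by
          gcongr; exact cosh_le_exp_half_sq (a i)
    _ = 2 ^ Fintype.card ι * exp ((∑ i, a i ^ 2) / 2) := by
        rw [Finset.prod_mul_distrib, Finset.prod_const, Finset.card_univ, ← exp_sum,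
          Finset.sum_div]

variable {E : Type*} [NormedAddCommGroup E] [InnerProductSpace ℝ E]

lemma norm_sum_signs_smul {ι : Type*} [Fintype ι] {b : ι → E}
    (hb : Orthonormal ℝ b) (s : ι → ℤˣ) :
    ‖∑ i, (s i : ℝ) • b i‖ = √(Fintype.card ι) := by
  have h : ∀ i, (s i : ℝ) * (s i : ℝ) = 1 := fun i ↦ by
    rcases Int.units_eq_one_or (s i) with h | h <;> simp [h]
  rw [norm_eq_sqrt_real_inner, hb.inner_sum]
  simp [h]

lemma sum_exp_inner_smul_sum_signs_le {ι : Type*} [Fintype ι] [DecidableEq ι]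
    (b : OrthonormalBasis ι ℝ E) (a : ℝ) (w : E) :
    ∑ s : ι → ℤˣ, exp ⟪a • ∑ i, (s i : ℝ) • b i, w⟫ ≤
      2 ^ Fintype.card ι * exp (a ^ 2 * ‖w‖ ^ 2 / 2) := by
  calc ∑ s : ι → ℤˣ, exp ⟪a • ∑ i, (s i : ℝ) • b i, w⟫
      = ∑ s : ι → ℤˣ, exp (∑ i, (s i : ℝ) * (a * ⟪b i, w⟫)) := by
        simp only [real_inner_smul_left, sum_inner, Finset.mul_sum, mul_left_comm]
    _ ≤ 2 ^ Fintype.card ι * exp ((∑ i, (a * ⟪b i, w⟫) ^ 2) / 2) := sum_exp_sum_signs_mul_le _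
    _ = 2 ^ Fintype.card ι * exp (a ^ 2 * ‖w‖ ^ 2 / 2) := by
        simp_rw [mul_pow, ← Finset.mul_sum, b.sum_sq_inner_right]

variable [MeasurableSpace E] [BorelSpace E] [FiniteDimensional ℝ E] {ν : Measure E} {r : ℝ≥0}

lemma integrable_exp_inner_of_norm_le [IsFiniteMeasure ν] (hr : ∀ᵐ w ∂ν, ‖w‖ ≤ r) (x : E) :
    Integrable (fun w ↦ exp ⟪x, w⟫) ν := by
  refine .of_bound (by fun_prop) (exp (‖x‖ * r)) ?_
  filter_upwards [hr] with w hw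
  rw [norm_of_nonneg (exp_pos _).le]
  gcongr
  exact (real_inner_le_norm x w).trans (by gcongr)

lemma integral_exp_inner_eq_of_norm_eq (hν : ∀ R : E ≃ₗᵢ[ℝ] E, ν.map R = ν) {x y : E}
    (hxy : ‖x‖ = ‖y‖) : ∫ w, exp ⟪x, w⟫ ∂ν = ∫ w, exp ⟪y, w⟫ ∂ν := by
  set R := (ℝ ∙ (x - y))ᗮ.reflection
  calc ∫ w, exp ⟪x, w⟫ ∂ν = ∫ w, exp ⟪R x, R w⟫ ∂ν := by simp only [R.inner_map_map]
    _ = ∫ w, exp ⟪y, w⟫ ∂(ν.map R) := by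
        rw [Submodule.reflection_sub hxy, integral_map (by fun_prop) (by fun_prop)]
    _ = ∫ w, exp ⟪y, w⟫ ∂ν := by rw [hν]

variable [Nontrivial E] [IsProbabilityMeasure ν]

lemma integral_exp_inner_le (hν : ∀ R : E ≃ₗᵢ[ℝ] E, ν.map R = ν) (hr : ∀ᵐ w ∂ν, ‖w‖ ≤ r) (x : E) :
    ∫ w, exp ⟪x, w⟫ ∂ν ≤ exp (r ^ 2 / finrank ℝ E * ‖x‖ ^ 2 / 2) := by
  set n := finrank ℝ E with hn_def
  have hn : (0 : ℝ) < n := by exact_mod_cast finrank_pos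
  let b := stdOrthonormalBasis ℝ E
  let y (s : Fin n → ℤˣ) : E := (‖x‖ / √n) • ∑ k, (s k : ℝ) • b k
  have norm_y (s) : ‖x‖ = ‖y s‖ := by
    rw [norm_smul, norm_sum_signs_smul b.orthonormal, Fintype.card_fin, ← hn_def,
      norm_of_nonneg (by positivity)]
    field_simp
  have sum_le (w : E) (hw : ‖w‖ ≤ r) :
      ∑ s, exp ⟪y s, w⟫ ≤ 2 ^ n * exp (r ^ 2 / n * ‖x‖ ^ 2 / 2) := by
    calc ∑ s, exp ⟪y s, w⟫ ≤ 2 ^ n * exp ((‖x‖ / √n) ^ 2 * ‖w‖ ^ 2 / 2) := by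
          simpa only [Fintype.card_fin] using sum_exp_inner_smul_sum_signs_le b (‖x‖ / √n) w
      _ = 2 ^ n * exp (‖w‖ ^ 2 / n * ‖x‖ ^ 2 / 2) := by
          rw [div_pow, sq_sqrt hn.le]
          ring_nf
      _ ≤ 2 ^ n * exp (r ^ 2 / n * ‖x‖ ^ 2 / 2) := by gcongr
  have hint (s) : Integrable (fun w ↦ exp ⟪y s, w⟫) ν := integrable_exp_inner_of_norm_le hr _
  refine le_of_mul_le_mul_left ?_ (by positivity : (0 : ℝ) < 2 ^ n)
  calc 2 ^ n * ∫ w, exp ⟪x, w⟫ ∂ν = ∑ s, ∫ w, exp ⟪y s, w⟫ ∂ν := by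
        simp [← integral_exp_inner_eq_of_norm_eq hν (norm_y _)]
    _ = ∫ w, ∑ s, exp ⟪y s, w⟫ ∂ν := (integral_finsetSum _ fun s _ ↦ hint s).symm
    _ ≤ ∫ _, 2 ^ n * exp (r ^ 2 / n * ‖x‖ ^ 2 / 2) ∂ν :=
        integral_mono_ae (integrable_finsetSum _ fun s _ ↦ hint s) (integrable_const _)
          (hr.mono sum_le)
    _ = 2 ^ n * exp (r ^ 2 / n * ‖x‖ ^ 2 / 2) := by simp

theorem isSubgaussianVector_id_of_map_isometry_eq (hν : ∀ R : E ≃ₗᵢ[ℝ] E, ν.map R = ν)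
    (hr : ∀ᵐ w ∂ν, ‖w‖ ≤ r) : IsSubgaussianVector id (r ^ 2 / finrank ℝ E) ν := by
  refine fun x ↦ ⟨fun t ↦ ?_, fun t ↦ ?_⟩
  · simpa only [real_inner_smul_left] using! integrable_exp_inner_of_norm_le hr (t • x)
  · have h := integral_exp_inner_le hν hr (t • x)
    simp only [real_inner_smul_left, norm_smul, mul_pow, norm_eq_abs, sq_abs] at h
    simpa only [mgf, id, NNReal.coe_mul, NNReal.coe_div, NNReal.coe_pow, NNReal.coe_natCast,
      coe_nnnorm, mul_assoc, mul_comm (t ^ 2)] using h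

end RotationInvariant

section ExpSqNorm

variable {V : Type*} [NormedAddCommGroup V] [InnerProductSpace ℝ V] [FiniteDimensional ℝ V]
  [MeasurableSpace V] [BorelSpace V]

lemma lintegral_exp_neg_mul_sq_norm {b : ℝ} (hb : 0 < b) :
    ∫⁻ v : V, .ofReal (exp (-b * ‖v‖ ^ 2)) = .ofReal ((π / b) ^ (finrank ℝ V / 2 : ℝ)) := by
  have h := GaussianFourier.integral_rexp_neg_mul_sq_norm (V := V) hb
  rw [← h, ofReal_integral_eq_lintegral_ofReal (.of_integral_ne_zero (by rw [h]; positivity))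
    (ae_of_all _ fun v ↦ (exp_pos _).le)]

lemma lintegral_exp_inner_sub_mul_sq_norm {b : ℝ} (hb : 0 < b) (w : V) :
    ∫⁻ v : V, .ofReal (exp (⟪v, w⟫ - b * ‖v‖ ^ 2)) =
      .ofReal (exp (‖w‖ ^ 2 / (4 * b))) * .ofReal ((π / b) ^ (finrank ℝ V / 2 : ℝ)) := by
  have complete_square (v : V) : ⟪v, w⟫ - b * ‖v‖ ^ 2 =
      ‖w‖ ^ 2 / (4 * b) + -b * ‖v - (2 * b)⁻¹ • w‖ ^ 2 := by
    rw [norm_sub_sq_real, real_inner_smul_right, norm_smul, norm_of_nonneg (by positivity)]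
    field_simp
    ring
  simp_rw [complete_square, exp_add, ENNReal.ofReal_mul (exp_pos _).le]
  rw [lintegral_const_mul _ (by fun_prop),
    lintegral_sub_right_eq_self (fun v : V ↦ ENNReal.ofReal (exp (-b * ‖v‖ ^ 2))),
    lintegral_exp_neg_mul_sq_norm hb]

namespace IsSubgaussianVector

variable {Ω : Type*} [MeasurableSpace Ω] {μ : Measure Ω} {X : Ω → V} {c : ℝ≥0} {t : ℝ}

lemma aemeasurable (hX : IsSubgaussianVector X c μ) : AEMeasurable X μ := by
  let b := stdOrthonormalBasis ℝ V
  have h : X = fun ω ↦ ∑ i, ⟪b i, X ω⟫ • b i := funext fun ω ↦ (b.sum_repr' (X ω)).symm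
  rw [h]
  exact Finset.aemeasurable_fun_sum _ fun i _ ↦ (hX (b i)).aemeasurable.smul_const (b i)

-- With `b = 1 / (4 * t)`, the Gaussian average over `v` of `exp (⟪v, X⟫ - b * ‖v‖ ^ 2)` is
-- proportional to `exp (t * ‖X‖ ^ 2)`, so Tonelli reduces the claim to the marginals of `X`.
lemma lintegral_exp_mul_sq_norm_le [SFinite μ] (hX : IsSubgaussianVector X c μ) (ht : 0 < t)
    (hct : 2 * c * t < 1) :
    ∫⁻ ω, .ofReal (exp (t * ‖X ω‖ ^ 2)) ∂μ ≤
      .ofReal ((1 - 2 * c * t) ^ (-(finrank ℝ V / 2 : ℝ))) := by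
  set b := 1 / (4 * t)
  set p : ℝ := finrank ℝ V / 2
  have hb : 0 < b := by positivity
  have ht_eq (x : ℝ) : t * x = x / (4 * b) := by simp only [b]; field_simp
  have hbc : b - c / 2 = b * (1 - 2 * c * t) := by simp only [b]; field_simp; ring
  have hct' : 0 < 1 - 2 * c * t := by linarith
  have hK : ENNReal.ofReal ((π / b) ^ p) ≠ 0 := by
    rw [ENNReal.ofReal_ne_zero_iff]; positivity
  have hXm := hX.aemeasurable
  refine (ENNReal.mul_le_mul_iff_left hK ENNReal.ofReal_ne_top).1 ?_
  calc (∫⁻ ω, .ofReal (exp (t * ‖X ω‖ ^ 2)) ∂μ) * .ofReal ((π / b) ^ p)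
      = ∫⁻ ω, (∫⁻ v : V, .ofReal (exp (⟪v, X ω⟫ - b * ‖v‖ ^ 2))) ∂μ := by
        rw [← lintegral_mul_const'' _ (by fun_prop)]
        simp_rw [lintegral_exp_inner_sub_mul_sq_norm hb, ht_eq, p]
    _ = ∫⁻ v : V, (∫⁻ ω, .ofReal (exp (⟪v, X ω⟫ - b * ‖v‖ ^ 2)) ∂μ) :=
        lintegral_lintegral_swap (by
          have := hXm.comp_fst (ν := (volume : Measure V))
          fun_prop)
    _ ≤ ∫⁻ v : V, .ofReal (exp (-(b - c / 2) * ‖v‖ ^ 2)) := by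
        refine lintegral_mono fun v ↦ ?_
        simp_rw [sub_eq_add_neg ⟪v, X _⟫, exp_add, ENNReal.ofReal_mul (exp_pos _).le]
        rw [lintegral_mul_const'' _ (by fun_prop)]
        grw [hX.lintegral_exp_inner_le v]
        rw [← ENNReal.ofReal_mul (exp_pos _).le, ← exp_add]
        exact le_of_eq (by ring_nf)
    _ = .ofReal ((1 - 2 * c * t) ^ (-p)) * .ofReal ((π / b) ^ p) := by
        rw [hbc, lintegral_exp_neg_mul_sq_norm (by positivity),
          ← ENNReal.ofReal_mul (by positivity), ← div_div, div_rpow (by positivity) hct'.le,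
          rpow_neg hct'.le, div_eq_inv_mul]

lemma integrable_exp_mul_sq_norm [SFinite μ] (hX : IsSubgaussianVector X c μ) (ht : 0 < t)
    (hct : 2 * c * t < 1) : Integrable (fun ω ↦ exp (t * ‖X ω‖ ^ 2)) μ := by
  have hXm := hX.aemeasurable
  refine ⟨by fun_prop, ?_⟩
  rw [hasFiniteIntegral_iff_ofReal (ae_of_all _ fun ω ↦ (exp_pos _).le)]
  exact (hX.lintegral_exp_mul_sq_norm_le ht hct).trans_lt ENNReal.ofReal_lt_top

lemma integral_exp_mul_sq_norm_le [SFinite μ] (hX : IsSubgaussianVector X c μ) (ht : 0 < t)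
    (hct : 2 * c * t < 1) :
    ∫ ω, exp (t * ‖X ω‖ ^ 2) ∂μ ≤ (1 - 2 * c * t) ^ (-(finrank ℝ V / 2 : ℝ)) := by
  rw [← ENNReal.ofReal_le_ofReal_iff (rpow_nonneg (by linarith) _),
    ofReal_integral_eq_lintegral_ofReal (hX.integrable_exp_mul_sq_norm ht hct)
      (ae_of_all _ fun ω ↦ (exp_pos _).le)]
  exact hX.lintegral_exp_mul_sq_norm_le ht hct

lemma integrable_mul_sq_norm [SFinite μ] (hX : IsSubgaussianVector X c μ) (ht : 0 < t)
    (hct : 2 * c * t < 1) : Integrable (fun ω ↦ t * ‖X ω‖ ^ 2) μ := by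
  have hXm := hX.aemeasurable
  refine (hX.integrable_exp_mul_sq_norm ht hct).mono' (by fun_prop) (ae_of_all _ fun ω ↦ ?_)
  rw [norm_of_nonneg (by positivity)]
  linarith [add_one_le_exp (t * ‖X ω‖ ^ 2)]

lemma integrable_sq_norm [SFinite μ] (hX : IsSubgaussianVector X c μ) :
    Integrable (fun ω ↦ ‖X ω‖ ^ 2) μ := by
  have hc : (0 : ℝ) < c + 1 := by positivity
  have hct : 2 * c * (1 / (2 * (c + 1)) : ℝ) < 1 := by
    field_simp
    linarith
  simpa [← mul_assoc, hc.ne'] using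
    (hX.integrable_mul_sq_norm (by positivity) hct).const_mul (2 * ((c : ℝ) + 1))

end IsSubgaussianVector

end ExpSqNorm

section Maximum

variable {Ω ι : Type*} [MeasurableSpace Ω] {μ : Measure Ω}

lemma integrable_iSup [Finite ι] {Z : ι → Ω → ℝ} (hZ : ∀ i, Integrable (Z i) μ) :
    Integrable (fun ω ↦ ⨆ i, Z i ω) μ := by
  have := Fintype.ofFinite ι
  refine (integrable_finsetSum Finset.univ fun i _ ↦ (hZ i).abs).mono'
    (AEMeasurable.iSup fun i ↦ (hZ i).aemeasurable).aestronglyMeasurable (ae_of_all _ fun ω ↦ ?_)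
  have h (i : ι) : |Z i ω| ≤ ∑ j, |Z j ω| :=
    Finset.single_le_sum (f := fun j ↦ |Z j ω|) (fun j _ ↦ abs_nonneg _) (Finset.mem_univ i)
  have hbdd : BddAbove (Set.range fun i ↦ Z i ω) := (Set.finite_range _).bddAbove
  rcases isEmpty_or_nonempty ι with _ | _
  · simp
  · have i : ι := Classical.arbitrary ι
    exact abs_le.2 ⟨(neg_le_of_abs_le (h i)).trans (le_ciSup hbdd i),
      ciSup_le fun j ↦ (le_abs_self _).trans (h j)⟩

variable [Nonempty ι] [IsProbabilityMeasure μ]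

lemma sq_integral_iSup_le [Finite ι] {Z : ι → Ω → ℝ} (hZ : ∀ i, 0 ≤ Z i)
    (hm : ∀ i, AEMeasurable (Z i) μ) (hint : ∀ i, Integrable (fun ω ↦ Z i ω ^ 2) μ) :
    (∫ ω, ⨆ i, Z i ω ∂μ) ^ 2 ≤ ∫ ω, ⨆ i, Z i ω ^ 2 ∂μ := by
  have hZ_int (i : ι) : Integrable (Z i) μ :=
    ((memLp_two_iff_integrable_sq (hm i).aestronglyMeasurable).2 (hint i)).integrable one_le_two
  have iSup_sq (ω : Ω) : (⨆ i, Z i ω) ^ 2 = ⨆ i, Z i ω ^ 2 := iSup_pow (fun i ↦ hZ i ω) 2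
  simp only [← iSup_sq]
  exact even_two.convexOn_pow.map_integral_le (continuous_pow 2).continuousOn isClosed_univ
    (ae_of_all _ fun _ ↦ Set.mem_univ _) (integrable_iSup hZ_int)
    (by simpa only [Function.comp_def, iSup_sq] using integrable_iSup hint)

variable [Fintype ι]

lemma exp_integral_iSup_le_sum {Z : ι → Ω → ℝ} (hZ : ∀ i, Integrable (Z i) μ)
    (hexp : ∀ i, Integrable (fun ω ↦ exp (Z i ω)) μ) :
    exp (∫ ω, ⨆ i, Z i ω ∂μ) ≤ ∑ i, ∫ ω, exp (Z i ω) ∂μ := by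
  have exp_iSup (ω : Ω) : exp (⨆ i, Z i ω) = ⨆ i, exp (Z i ω) :=
    exp_monotone.map_ciSup_of_continuousAt continuous_exp.continuousAt
      (Set.finite_range _).bddAbove
  have hsup : Integrable (fun ω ↦ exp (⨆ i, Z i ω)) μ := by
    simpa only [exp_iSup] using integrable_iSup hexp
  calc exp (∫ ω, ⨆ i, Z i ω ∂μ) ≤ ∫ ω, exp (⨆ i, Z i ω) ∂μ :=
        convexOn_exp.map_integral_le continuous_exp.continuousOn isClosed_univ
          (ae_of_all _ fun _ ↦ Set.mem_univ _) (integrable_iSup hZ) hsup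
    _ ≤ ∫ ω, ∑ i, exp (Z i ω) ∂μ := by
        refine integral_mono hsup (integrable_finsetSum _ fun i _ ↦ hexp i) fun ω ↦ ?_
        simp only [exp_iSup]
        exact ciSup_le fun i ↦ Finset.single_le_sum (f := fun i ↦ exp (Z i ω))
          (fun j _ ↦ (exp_pos _).le) (Finset.mem_univ i)
    _ = ∑ i, ∫ ω, exp (Z i ω) ∂μ := integral_finsetSum _ fun i _ ↦ hexp i

namespace IsSubgaussianVector

variable {V : Type*} [NormedAddCommGroup V] [InnerProductSpace ℝ V] [FiniteDimensional ℝ V]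
  [MeasurableSpace V] [BorelSpace V] {X : ι → Ω → V} {c : ℝ≥0} {t : ℝ}

lemma mul_integral_iSup_sq_norm_le (hX : ∀ i, IsSubgaussianVector (X i) c μ) (ht : 0 < t)
    (hct : 2 * c * t < 1) :
    t * ∫ ω, ⨆ i, ‖X i ω‖ ^ 2 ∂μ ≤
      log (Fintype.card ι) - finrank ℝ V / 2 * log (1 - 2 * c * t) := by
  have hct' : 0 < 1 - 2 * c * t := by linarith
  rw [← log_rpow hct', sub_eq_add_neg, ← log_inv, ← rpow_neg hct'.le,
    ← log_mul (by positivity) (by positivity), le_log_iff_exp_le (by positivity),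
    ← integral_const_mul]
  simp_rw [mul_iSup_of_nonneg ht.le]
  calc exp (∫ ω, ⨆ i, t * ‖X i ω‖ ^ 2 ∂μ) ≤ ∑ i, ∫ ω, exp (t * ‖X i ω‖ ^ 2) ∂μ :=
        exp_integral_iSup_le_sum (fun i ↦ (hX i).integrable_mul_sq_norm ht hct)
          fun i ↦ (hX i).integrable_exp_mul_sq_norm ht hct
    _ ≤ ∑ _ : ι, (1 - 2 * c * t) ^ (-(finrank ℝ V / 2 : ℝ)) :=
        Finset.sum_le_sum fun i _ ↦ (hX i).integral_exp_mul_sq_norm_le ht hct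
    _ = Fintype.card ι * (1 - 2 * c * t) ^ (-(finrank ℝ V / 2 : ℝ)) := by simp

theorem integral_iSup_norm_le (hX : ∀ i, IsSubgaussianVector (X i) c μ) (hc : 0 < c) :
    ∫ ω, ⨆ i, ‖X i ω‖ ∂μ ≤ 2 * √(c * (log (Fintype.card ι) + finrank ℝ V / 2 * log 2)) := by
  have hct : 2 * c * (1 / (4 * c) : ℝ) = 1 / 2 := by field_simp; norm_num
  have hsq : ∫ ω, ⨆ i, ‖X i ω‖ ^ 2 ∂μ ≤
      2 ^ 2 * (c * (log (Fintype.card ι) + finrank ℝ V / 2 * log 2)) := by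
    have h := mul_integral_iSup_sq_norm_le hX (t := 1 / (4 * c)) (by positivity)
      (by rw [hct]; norm_num)
    rw [hct, show (1 - 1 / 2 : ℝ) = 2⁻¹ by norm_num, log_inv, mul_neg, sub_neg_eq_add,
      one_div_mul_eq_div, div_le_iff₀' (by positivity)] at h
    linarith
  calc ∫ ω, ⨆ i, ‖X i ω‖ ∂μ
      ≤ √(2 ^ 2 * (c * (log (Fintype.card ι) + finrank ℝ V / 2 * log 2))) :=
        le_sqrt_of_sq_le <| (sq_integral_iSup_le (fun i ω ↦ norm_nonneg (X i ω))
          (fun i ↦ (hX i).aemeasurable.norm) fun i ↦ (hX i).integrable_sq_norm).trans hsq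
    _ = 2 * √(c * (log (Fintype.card ι) + finrank ℝ V / 2 * log 2)) := by
        rw [sqrt_mul (by positivity), sqrt_sq zero_le_two]

end IsSubgaussianVector

end Maximum

section Stiefel

variable {ι κ : Type*}

lemma measurable_entry (i : ι) (j : κ) : Measurable fun U : Matrix ι κ ℝ ↦ U i j :=
  (measurable_pi_apply j).comp (measurable_pi_apply i)

lemma measurable_mulVec [Fintype κ] (v : κ → ℝ) : Measurable fun U : Matrix ι κ ℝ ↦ U *ᵥ v :=
  measurable_pi_lambda _ fun i ↦ Finset.measurable_fun_sum _ fun j _ ↦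
    (measurable_entry i j).mul_const (v j)

variable [Fintype ι]

lemma measurable_mul_left (Q : Matrix ι ι ℝ) : Measurable fun U : Matrix ι κ ℝ ↦ Q * U :=
  measurable_pi_lambda _ fun i ↦ measurable_pi_lambda _ fun j ↦
    Finset.measurable_fun_sum _ fun k _ ↦ (measurable_entry k j).const_mul (Q i k)

lemma measurable_transpose_mul_self : Measurable fun U : Matrix ι κ ℝ ↦ Uᵀ * U :=
  measurable_pi_lambda _ fun a ↦ measurable_pi_lambda _ fun b ↦
    Finset.measurable_fun_sum _ fun i _ ↦ (measurable_entry i a).mul (measurable_entry i b)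

lemma measurableSet_transpose_mul_self_eq_one [Countable κ] [DecidableEq κ] :
    MeasurableSet {U : Matrix ι κ ℝ | Uᵀ * U = 1} :=
  have : MeasurableSingletonClass (Matrix κ κ ℝ) :=
    inferInstanceAs (MeasurableSingletonClass (κ → κ → ℝ))
  measurable_transpose_mul_self (measurableSet_singleton 1)

variable [Fintype κ] [DecidableEq κ]

lemma norm_toLp_mulVec {U : Matrix ι κ ℝ} (hU : Uᵀ * U = 1) (v : κ → ℝ) :
    ‖toLp 2 (U *ᵥ v)‖ = ‖toLp 2 v‖ := by
  have h : (U *ᵥ v) ⬝ᵥ (U *ᵥ v) = v ⬝ᵥ v := by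
    rw [dotProduct_mulVec, ← mulVec_transpose, mulVec_mulVec, hU, one_mulVec]
  simp only [EuclideanSpace.norm_eq, norm_eq_abs, sq_abs]
  simpa only [dotProduct, ← sq] using congrArg sqrt h

variable [DecidableEq ι]

lemma exists_orthogonal_mulVec_eq (R : EuclideanSpace ℝ ι ≃ₗᵢ[ℝ] EuclideanSpace ℝ ι) :
    ∃ Q : Matrix ι ι ℝ, Qᵀ * Q = 1 ∧ ∀ x, toLp 2 (Q *ᵥ x) = R (toLp 2 x) := by
  let e := toEuclideanCLM (n := ι) (𝕜 := ℝ)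
  let u := Unitary.linearIsometryEquiv.symm R
  have he : e (e.symm u) = u := e.apply_symm_apply u
  refine ⟨e.symm u, EquivLike.injective e ?_, fun x ↦ ?_⟩
  · rw [← conjTranspose_eq_transpose_of_trivial, ← star_eq_conjTranspose, map_mul, map_star, he,
      Unitary.coe_star_mul_self, map_one]
  · exact congrArg (· (toLp 2 x)) he

variable {μ : Measure (Matrix ι κ ℝ)} [IsProbabilityMeasure μ] [Nonempty ι]

theorem isSubgaussianVector_row (hμ : ∀ᵐ U ∂μ, Uᵀ * U = 1)
    (hinv : ∀ Q : Matrix ι ι ℝ, Qᵀ * Q = 1 → μ.map (fun U ↦ Q * U) = μ) (i : ι) :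
    IsSubgaussianVector (fun U ↦ toLp 2 (U i)) (Fintype.card ι : ℝ≥0)⁻¹ μ := by
  intro v
  let W (U : Matrix ι κ ℝ) : EuclideanSpace ℝ ι := toLp 2 (U *ᵥ v)
  have hW : Measurable W := (WithLp.measurable_toLp 2 _).comp (measurable_mulVec v)
  have map_isometry (R : EuclideanSpace ℝ ι ≃ₗᵢ[ℝ] EuclideanSpace ℝ ι) :
      (μ.map W).map R = μ.map W := by
    obtain ⟨Q, hQ, hQR⟩ := exists_orthogonal_mulVec_eq R
    have hRW : R ∘ W = W ∘ fun U ↦ Q * U := by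
      ext1 U
      simp only [Function.comp_apply, W, ← hQR, mulVec_mulVec]
    rw [Measure.map_map (by fun_prop) hW, hRW, ← Measure.map_map hW (measurable_mul_left Q),
      hinv Q hQ]
  have norm_le : ∀ᵐ w ∂μ.map W, ‖w‖ ≤ ‖v‖₊ := by
    rw [ae_map_iff hW.aemeasurable (measurableSet_le (by fun_prop) (by fun_prop))]
    filter_upwards [hμ] with U hU using (norm_toLp_mulVec hU v).le
  have := Measure.isProbabilityMeasure_map (μ := μ) hW.aemeasurable
  have h := isSubgaussianVector_id_of_map_isometry_eq map_isometry norm_le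
    (EuclideanSpace.single i 1)
  have h' := HasSubgaussianMGF.of_map hW.aemeasurable h
  simpa [Function.comp_def, W, div_eq_inv_mul, mulVec,
    EuclideanSpace.inner_eq_star_dotProduct] using h'

end Stiefel

lemma rowNorm_eq_norm_toLp {n d : ℕ} (U : Matrix (Fin n) (Fin d) ℝ) (i : Fin n) :
    rowNorm U i = ‖toLp 2 (U i)‖ := by
  simp [rowNorm, EuclideanSpace.norm_eq]

lemma two_mul_sqrt_log_add_div_le {d n : ℝ} (hd : 0 ≤ d) (hn : exp d ≤ n) :
    2 * √((log n + d / 2 * log 2) / n) ≤ 3 * √(log n / n) := by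
  have hn0 : 0 < n := (exp_pos d).trans_le hn
  have hdn : d ≤ log n := (le_log_iff_exp_le hn0).2 hn
  have hlog2 : d * log 2 ≤ d := mul_le_of_le_one_right hd (by linarith [log_two_lt_d9])
  calc 2 * √((log n + d / 2 * log 2) / n) ≤ 2 * √((3 / 2) ^ 2 * (log n / n)) := by
        rw [← mul_div_assoc]
        gcongr
        linarith
    _ = 3 * √(log n / n) := by
        rw [sqrt_mul (by positivity), sqrt_sq (by norm_num)]
        ring

theorem stiefel_expected_max_row_norm_general {ι κ : Type*} [Fintype ι] [DecidableEq ι] [Nonempty ι]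
    [Fintype κ] [DecidableEq κ] {μ : Measure (Matrix ι κ ℝ)} [IsProbabilityMeasure μ]
    (hμ : ∀ᵐ U ∂μ, Uᵀ * U = 1)
    (hinv : ∀ Q : Matrix ι ι ℝ, Qᵀ * Q = 1 → μ.map (fun U ↦ Q * U) = μ) :
    ∫ U, ⨆ i, ‖toLp 2 (U i)‖ ∂μ ≤
      2 * √((log (Fintype.card ι) + Fintype.card κ / 2 * log 2) / Fintype.card ι) := by
  have hc : (0 : ℝ≥0) < (Fintype.card ι : ℝ≥0)⁻¹ := by positivity
  simpa [div_eq_inv_mul] using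
    IsSubgaussianVector.integral_iSup_norm_le (isSubgaussianVector_row hμ hinv) hc

/-- **Expected maximal row norm of a random Stiefel matrix.**
Let `μ` be the symmetric measure on the Stiefel manifold `St(n,d) = {U : Uᵀ U = I_d}`,
characterized as a probability measure on `n × d` matrices supported on `St(n,d)` and
invariant under left multiplication by every orthogonal `n × n` matrix. If `n ≥ e^d`, then
`E[max_{1 ≤ i ≤ n} ‖u_i‖] ≤ 3 √((ln n)/n)`, where `u_i` are the rows of `U ∼ μ`. -/
theorem stiefel_expected_max_row_norm
    (d n : ℕ) (hd : 2 ≤ d) (hn : Real.exp d ≤ n)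
    (μ : Measure (Matrix (Fin n) (Fin d) ℝ)) [IsProbabilityMeasure μ]
    (hsupp : μ {U : Matrix (Fin n) (Fin d) ℝ | Uᵀ * U = 1} = 1)
    (hinv : ∀ Q : Matrix (Fin n) (Fin n) ℝ, Qᵀ * Q = 1 →
      Measure.map (fun U => Q * U) μ = μ) :
    (∫ U, (⨆ i : Fin n, rowNorm U i) ∂μ) ≤ 3 * Real.sqrt (Real.log n / n) := by
  have hn0 : 0 < n := by exact_mod_cast (exp_pos d).trans_le hn
  have : Nonempty (Fin n) := Fin.pos_iff_nonempty.1 hn0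
  have hμ : ∀ᵐ U ∂μ, Uᵀ * U = 1 :=
    (mem_ae_iff_prob_eq_one measurableSet_transpose_mul_self_eq_one).2 hsupp
  simp_rw [rowNorm_eq_norm_toLp]
  exact (stiefel_expected_max_row_norm_general hμ hinv).trans
    (by simpa using two_mul_sqrt_log_add_div_le d.cast_nonneg hn)
end
end
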